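/- arXiv:1903.08160 — 10 statements merged into one kernel-verified Lean document; each statement's English description precedes it below -/
import Mathlib

section
/- For a Tychonoff space X, the following are equivalent: (1) the bitopological function space (C(X), τ_k, τ_p) satisfies S₁(Ω^k_0, Ω^p_0), i.e., for every sequence (A_n) of subsets of C(X) each having the constant zero function 0 in its closure in C_k(X) but with 0 ∉ A_n, one can choose f_n ∈ A_n such that 0 lies in the closure of {f_n : n ∈ ℕ} in C_p(X); (2) X satisfies S₁(𝒦, Ω), i.e., for every sequence (𝒰_n) of open k-covers of X one can choose U_n ∈ 𝒰_n such that {U_n : n ∈ ℕ} is an ω-cover of X. -/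
open Set Filter Topology TopologicalSpace

universe u

/-- The topology of pointwise convergence on `C(X, ℝ)`. -/
def pointwiseTopology (X : Type u) [TopologicalSpace X] : TopologicalSpace C(X, ℝ) :=
  TopologicalSpace.induced (fun f : C(X, ℝ) => (f : X → ℝ)) Pi.topologicalSpace

/-- `𝒰` is an (open) k-cover of `X`: a nontrivial open cover such that every compact
subset of `X` is contained in some member of `𝒰`. -/
def IsKCover {X : Type u} [TopologicalSpace X] (𝒰 : Set (Set X)) : Prop :=
  (∀ U ∈ 𝒰, IsOpen U) ∧ ⋃₀ 𝒰 = Set.univ ∧ Set.univ ∉ 𝒰 ∧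
    ∀ K : Set X, IsCompact K → ∃ U ∈ 𝒰, K ⊆ U

/-- `𝒰` is an (open) ω-cover of `X`: a nontrivial open cover such that every finite
subset of `X` is contained in some member of `𝒰`. -/
def IsOmegaCover {X : Type u} [TopologicalSpace X] (𝒰 : Set (Set X)) : Prop :=
  (∀ U ∈ 𝒰, IsOpen U) ∧ ⋃₀ 𝒰 = Set.univ ∧ Set.univ ∉ 𝒰 ∧
    ∀ F : Set X, F.Finite → ∃ U ∈ 𝒰, F ⊆ U

/-- `𝒰` is an (open) γ-cover of `X`: an infinite open cover such that for every finite
subset `F` of `X`, all but finitely many members of `𝒰` contain `F`. -/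
def IsGammaCover {X : Type u} [TopologicalSpace X] (𝒰 : Set (Set X)) : Prop :=
  (∀ U ∈ 𝒰, IsOpen U) ∧ ⋃₀ 𝒰 = Set.univ ∧ 𝒰.Infinite ∧
    ∀ F : Set X, F.Finite → {U ∈ 𝒰 | ¬ F ⊆ U}.Finite

/-- `iw(X) = ℵ₀`: there is a second-countable Tychonoff space `Y` and a continuous
bijection (one-to-one and onto map) from `X` to `Y`. -/
def CountableIWeight (X : Type u) [TopologicalSpace X] : Prop :=
  ∃ (Y : Type u) (_ : TopologicalSpace Y), SecondCountableTopology Y ∧ T35Space Y ∧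
    ∃ f : X → Y, Continuous f ∧ Function.Bijective f

/-- The selection principle `S₁(𝒜, ℬ)`. -/
def S1sel {α : Type u} (𝒜 ℬ : Set (Set α)) : Prop :=
  ∀ A : ℕ → Set α, (∀ n, A n ∈ 𝒜) →
    ∃ b : ℕ → α, (∀ n, b n ∈ A n) ∧ Set.range b ∈ ℬ

/-- The selection principle `S_fin(𝒜, ℬ)`. -/
def SfinSel {α : Type u} (𝒜 ℬ : Set (Set α)) : Prop :=
  ∀ A : ℕ → Set α, (∀ n, A n ∈ 𝒜) →
    ∃ B : ℕ → Set α, (∀ n, (B n).Finite ∧ B n ⊆ A n) ∧ (⋃ n, B n) ∈ ℬ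

/-- A strategy for player ONE in the game `G₁(𝒜, ℬ)` (a function from finite sequences
of TWO's moves to sets) is winning if it always plays members of `𝒜` and ONE wins every
play in which he follows it. -/
def IsWinningStrategyOneG1 {α : Type u} (𝒜 ℬ : Set (Set α)) (σ : List α → Set α) : Prop :=
  (∀ h : List α, σ h ∈ 𝒜) ∧
    ∀ b : ℕ → α, (∀ n, b n ∈ σ (List.ofFn fun i : Fin n => b i)) → Set.range b ∉ ℬ

/-- A strategy for player ONE in the game `G_fin(𝒜, ℬ)` (a function from finite sequences
of TWO's moves, which are finite subsets, to sets) is winning if it always plays members of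
`𝒜` and ONE wins every play in which he follows it. -/
def IsWinningStrategyOneGfin {α : Type u} (𝒜 ℬ : Set (Set α)) (σ : List (Set α) → Set α) :
    Prop :=
  (∀ h : List (Set α), σ h ∈ 𝒜) ∧
    ∀ B : ℕ → Set α,
      (∀ n, (B n).Finite ∧ B n ⊆ σ (List.ofFn fun i : Fin n => B i)) → (⋃ n, B n) ∉ ℬ

/-- `A ⊆ C(X, ℝ)` is sequentially dense in `C_p(X)`: every continuous function is the
pointwise limit of a sequence from `A`. -/
def SeqDenseP (X : Type u) [TopologicalSpace X] (A : Set C(X, ℝ)) : Prop :=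
  ∀ g : C(X, ℝ), ∃ s : ℕ → C(X, ℝ), (∀ n, s n ∈ A) ∧
    Filter.Tendsto s Filter.atTop (@nhds _ (pointwiseTopology X) g)

/-- The family `Ω^k_0` of subsets of `C(X, ℝ)` not containing `0` but having `0` in their
closure with respect to the compact-open topology. -/
def OmegaKZero (X : Type u) [TopologicalSpace X] (A : Set C(X, ℝ)) : Prop :=
  (0 : C(X, ℝ)) ∉ A ∧ (0 : C(X, ℝ)) ∈ closure A

/-- The family `Ω^p_0` of subsets of `C(X, ℝ)` not containing `0` but having `0` in their
closure with respect to the topology of pointwise convergence. -/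
def OmegaPZero (X : Type u) [TopologicalSpace X] (A : Set C(X, ℝ)) : Prop :=
  (0 : C(X, ℝ)) ∉ A ∧ (0 : C(X, ℝ)) ∈ @closure _ (pointwiseTopology X) A

/-- The family `Γ^p_0` of infinite subsets `A` of `C(X, ℝ)` with `0 ∉ A` such that every
neighborhood of `0` in the topology of pointwise convergence contains all but finitely
many elements of `A`. -/
def GammaPZero (X : Type u) [TopologicalSpace X] (A : Set C(X, ℝ)) : Prop :=
  A.Infinite ∧ (0 : C(X, ℝ)) ∉ A ∧
    ∀ N ∈ @nhds _ (pointwiseTopology X) (0 : C(X, ℝ)), {f ∈ A | f ∉ N}.Finite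

/-- In a completely regular space a compact set and the complement of an open neighbourhood of it
are separated by a continuous real-valued function. -/
theorem exists_continuousMap_zero_one_of_isCompact_subset {X : Type*} [TopologicalSpace X]
    [CompletelyRegularSpace X] {K U : Set X} (hK : IsCompact K) (hU : IsOpen U) (hKU : K ⊆ U) :
    ∃ f : C(X, ℝ), (∀ x ∈ K, f x = 0) ∧ ∀ x ∉ U, f x = 1 := by
  obtain ⟨V, hV, rfl⟩ := isInducing_stoneCechUnit.isOpen_iff.mp hU
  obtain ⟨g, hg0, hg1, -⟩ := exists_continuous_zero_one_of_isClosed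
    (hK.image continuous_stoneCechUnit).isClosed hV.isClosed_compl
    (disjoint_compl_right_iff_subset.mpr (image_subset_iff.mpr hKU))
  exact ⟨g.comp ⟨stoneCechUnit, continuous_stoneCechUnit⟩,
    fun x hx => hg0 (mem_image_of_mem _ hx), fun x hx => hg1 hx⟩

theorem zero_mem_closure_compactOpen_iff {X : Type*} [TopologicalSpace X] {A : Set C(X, ℝ)} :
    (0 : C(X, ℝ)) ∈ closure A ↔
      ∀ K : Set X, IsCompact K → ∀ ε > 0, ∃ f ∈ A, ∀ x ∈ K, |f x| < ε := by
  have hb := (Metric.nhds_basis_ball (x := (0 : ℝ))).nhds_continuousMapConst (X := X)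
  have h0 : ContinuousMap.const X (0 : ℝ) = 0 := rfl
  rw [h0] at hb
  simp only [mem_closure_iff_nhds_basis hb, MapsTo, mem_ofPred_eq, mem_ball_zero_iff,
    Real.norm_eq_abs]
  exact ⟨fun h K hK ε hε => h (K, ε) ⟨hK, hε⟩, fun h p hp => h p.1 hp.1 p.2 hp.2⟩

theorem zero_mem_closure_pointwise_iff {X : Type u} [TopologicalSpace X] {A : Set C(X, ℝ)} :
    (0 : C(X, ℝ)) ∈ @closure _ (pointwiseTopology X) A ↔
      ∀ F : Set X, F.Finite → ∀ ε > 0, ∃ f ∈ A, ∀ x ∈ F, |f x| < ε := by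
  have hb := ((Metric.nhds_basis_ball (x := (0 : ℝ))).pi_self (ι := X)).comap
    (fun f : C(X, ℝ) => (f : X → ℝ))
  have h0 : @nhds _ (pointwiseTopology X) (0 : C(X, ℝ)) =
      comap (fun f : C(X, ℝ) => (f : X → ℝ)) (Filter.pi fun _ => 𝓝 (0 : ℝ)) := by
    rw [pointwiseTopology, nhds_induced, nhds_pi]
    rfl
  rw [← h0] at hb
  rw [@mem_closure_iff_nhds_basis _ (pointwiseTopology X) _ _ _ _ _ hb]
  simp only [mem_preimage, Set.mem_pi, mem_ball_zero_iff, Real.norm_eq_abs]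
  exact ⟨fun h F hF ε hε => h (F, ε) ⟨hF, hε⟩, fun h p hp => h p.1 hp.1 p.2 hp.2⟩

theorem isOmegaCover_selection_of_function_selection {X : Type u} [TopologicalSpace X] [T35Space X]
    (h : S1sel {A : Set C(X, ℝ) | OmegaKZero X A}
      {A : Set C(X, ℝ) | (0 : C(X, ℝ)) ∈ @closure _ (pointwiseTopology X) A}) :
    S1sel {𝒰 : Set (Set X) | IsKCover 𝒰} {𝒰 : Set (Set X) | IsOmegaCover 𝒰} := by
  intro 𝒰 h𝒰
  obtain ⟨f, hf, hf0⟩ := h (fun n => {f | ∃ U ∈ 𝒰 n, ∀ x ∉ U, f x = 1}) fun n => by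
    obtain ⟨hopen, -, huniv, hk⟩ := h𝒰 n
    refine ⟨?_, zero_mem_closure_compactOpen_iff.mpr fun K hK ε hε => ?_⟩
    · rintro ⟨U, hU, hU1⟩
      refine huniv (eq_univ_of_forall (s := U) (fun x => ?_) ▸ hU)
      by_contra hx
      simpa using hU1 x hx
    · obtain ⟨U, hU, hKU⟩ := hk K hK
      obtain ⟨f, hf0, hf1⟩ := exists_continuousMap_zero_one_of_isCompact_subset hK (hopen U hU) hKU
      exact ⟨f, ⟨U, hU, hf1⟩, fun x hx => by simpa [hf0 x hx] using hε⟩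
  choose U hU hU1 using hf
  have hfin : ∀ F : Set X, F.Finite → ∃ V ∈ range U, F ⊆ V := fun F hF => by
    obtain ⟨_, ⟨n, rfl⟩, hn⟩ := zero_mem_closure_pointwise_iff.mp hf0 F hF 1 one_pos
    refine ⟨U n, mem_range_self n, fun x hx => ?_⟩
    by_contra hxU
    simpa [hU1 n x hxU] using hn x hx
  refine ⟨U, hU, ?_, ?_, ?_, hfin⟩
  · rintro _ ⟨n, rfl⟩
    exact (h𝒰 n).1 _ (hU n)
  · refine eq_univ_of_forall fun x => ?_
    obtain ⟨V, hV, hxV⟩ := hfin {x} (finite_singleton x)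
    exact ⟨V, hV, hxV rfl⟩
  · rintro ⟨n, hn⟩
    exact (h𝒰 n).2.2.1 (hn ▸ hU n)

/-- If infinitely many `A n` contain a function uniformly smaller than `1 / (n + 1)`, then some
selection from the `A n` accumulates at `0` pointwise. -/
theorem exists_selection_of_frequently_small {X : Type u} [TopologicalSpace X]
    {A : ℕ → Set C(X, ℝ)} (hA : ∀ n, (A n).Nonempty)
    (hsmall : ∃ᶠ n : ℕ in atTop, ∃ f ∈ A n, ∀ x, |f x| < 1 / ((n : ℝ) + 1)) :
    ∃ f : ℕ → C(X, ℝ), (∀ n, f n ∈ A n) ∧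
      (0 : C(X, ℝ)) ∈ @closure _ (pointwiseTopology X) (range f) := by
  have hsel : ∀ n, ∃ f ∈ A n, (∃ g ∈ A n, ∀ x, |g x| < 1 / ((n : ℝ) + 1)) →
      ∀ x, |f x| < 1 / ((n : ℝ) + 1) := fun n => by
    by_cases hn : ∃ g ∈ A n, ∀ x, |g x| < 1 / ((n : ℝ) + 1)
    · obtain ⟨g, hg, hgs⟩ := hn
      exact ⟨g, hg, fun _ => hgs⟩
    · obtain ⟨g, hg⟩ := hA n
      exact ⟨g, hg, fun h => absurd h hn⟩
  choose f hf hfs using hsel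
  refine ⟨f, hf, zero_mem_closure_pointwise_iff.mpr fun F _ ε hε => ?_⟩
  obtain ⟨n, hn, hnε⟩ := (hsmall.and_eventually
    (tendsto_one_div_add_atTop_nhds_zero_nat.eventually (gt_mem_nhds hε))).exists
  exact ⟨f n, mem_range_self n, fun x _ => (hfs n hn x).trans hnε⟩

theorem function_selection_of_isOmegaCover_selection {X : Type u} [TopologicalSpace X]
    (h : S1sel {𝒰 : Set (Set X) | IsKCover 𝒰} {𝒰 : Set (Set X) | IsOmegaCover 𝒰}) :
    S1sel {A : Set C(X, ℝ) | OmegaKZero X A}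
      {A : Set C(X, ℝ) | (0 : C(X, ℝ)) ∈ @closure _ (pointwiseTopology X) A} := by
  intro A hA
  have hne : ∀ n, (A n).Nonempty := fun n => closure_nonempty_iff.mp ⟨0, (hA n).2⟩
  by_cases hsmall : ∃ᶠ n : ℕ in atTop, ∃ f ∈ A n, ∀ x, |f x| < 1 / ((n : ℝ) + 1)
  · exact exists_selection_of_frequently_small hne hsmall
  obtain ⟨N, hN⟩ := eventually_atTop.mp (not_frequently.mp hsmall)
  let S : ℕ → C(X, ℝ) → Set X := fun n f => {x | |f x| < 1 / ((n : ℝ) + 1)}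
  have hS : ∀ n, N ≤ n → ∀ f ∈ A n, S n f ≠ univ := fun n hn f hf hU =>
    hN n hn ⟨f, hf, fun x => (hU ▸ mem_univ x : x ∈ S n f)⟩
  obtain ⟨U, hU, -, -, -, hUfin⟩ := h (fun n => S (N + n) '' A (N + n)) fun n => by
    have hk : ∀ K : Set X, IsCompact K → ∃ V ∈ S (N + n) '' A (N + n), K ⊆ V := fun K hK => by
      obtain ⟨f, hf, hfK⟩ := zero_mem_closure_compactOpen_iff.mp (hA (N + n)).2 K hK
        (1 / (((N + n : ℕ) : ℝ) + 1)) (by positivity)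
      exact ⟨_, mem_image_of_mem _ hf, hfK⟩
    refine ⟨?_, eq_univ_of_forall fun x => ?_, ?_, hk⟩
    · rintro _ ⟨f, -, rfl⟩
      exact isOpen_lt f.continuous.abs continuous_const
    · obtain ⟨V, hV, hxV⟩ := hk {x} isCompact_singleton
      exact ⟨V, hV, hxV rfl⟩
    · rintro ⟨f, hf, hfU⟩
      exact hS _ (Nat.le_add_right N n) f hf hfU
  choose g hg hgU using hU
  choose a ha using hne
  let b : ℕ → C(X, ℝ) := fun n => if N ≤ n then g (n - N) else a n
  have hbN : ∀ n, b (N + n) = g n := fun n => by simp [b]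
  refine ⟨b, fun n => ?_, zero_mem_closure_pointwise_iff.mpr fun F hF ε hε => ?_⟩
  · by_cases hn : N ≤ n
    · obtain ⟨m, rfl⟩ := Nat.exists_eq_add_of_le hn
      exact hbN m ▸ hg m
    · simpa [b, hn] using ha n
  have hpt : ∀ n, ∃ x, x ∉ U n := fun n =>
    (ne_univ_iff_exists_notMem _).mp (hgU n ▸ hS _ (Nat.le_add_right N n) _ (hg n))
  choose p hp using hpt
  obtain ⟨M, hM⟩ := eventually_atTop.mp
    (tendsto_one_div_add_atTop_nhds_zero_nat.eventually (gt_mem_nhds hε))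
  -- Adding a point missed by each of the first `M` sets forces the chosen index to be at least `M`.
  obtain ⟨_, ⟨m, rfl⟩, hm⟩ := hUfin (F ∪ p '' Iio M) (hF.union ((finite_Iio M).image p))
  have hMm : M ≤ m := by
    by_contra! hlt
    exact hp m (hm (Or.inr (mem_image_of_mem p hlt)))
  refine ⟨b (N + m), mem_range_self _, fun x hx => ?_⟩
  have hxS : x ∈ S (N + m) (g m) := hgU m ▸ hm (Or.inl hx)
  rw [hbN]
  exact lt_trans hxS (hM (N + m) (hMm.trans (Nat.le_add_left m N)))

theorem statement0 (X : Type u) [TopologicalSpace X] [T35Space X] :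
    S1sel {A : Set C(X, ℝ) | OmegaKZero X A}
      {A : Set C(X, ℝ) | (0 : C(X, ℝ)) ∈ @closure _ (pointwiseTopology X) A} ↔
    S1sel {𝒰 : Set (Set X) | IsKCover 𝒰} {𝒰 : Set (Set X) | IsOmegaCover 𝒰} :=
  ⟨isOmegaCover_selection_of_function_selection, function_selection_of_isOmegaCover_selection⟩
end

section
/- For a Tychonoff space X, the space C_k(X) of continuous real-valued functions with the compact-open topology is separable if and only if iw(X) = ℵ₀, i.e., if and only if there exist a second-countable Tychonoff space Y and a continuous injective map from X onto Y. -/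
open Set Filter Topology TopologicalSpace

universe u

theorem ContinuousMap.continuous_prodMk_uniformSpace {X Y Z : Type*} [TopologicalSpace X]
    [UniformSpace Y] [UniformSpace Z] :
    Continuous fun p : C(X, Y) × C(X, Z) => p.1.prodMk p.2 := by
  rw [continuous_iff_continuousAt]
  intro p
  refine ContinuousMap.tendsto_iff_forall_isCompact_tendstoUniformlyOn.2 fun K hK => ?_
  rw [nhds_prod_eq]
  exact (ContinuousMap.tendsto_iff_forall_isCompact_tendstoUniformlyOn.1 tendsto_id K hK).prodMk
    (ContinuousMap.tendsto_iff_forall_isCompact_tendstoUniformlyOn.1 tendsto_id K hK)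

/-- Multiplication on `C(X, ℝ)` is continuous for the compact-open topology, without any local
compactness assumption on `X`. -/
theorem continuousMul_continuousMap_real (X : Type*) [TopologicalSpace X] :
    ContinuousMul C(X, ℝ) where
  continuous_mul :=
    (ContinuousMap.continuous_postcomp (⟨fun q => q.1 * q.2, by fun_prop⟩ : C(ℝ × ℝ, ℝ))).comp
      ContinuousMap.continuous_prodMk_uniformSpace

/-- A countable family of continuous real-valued functions separating the points of `X` makes
`C(X, ℝ)` separable: the rational polynomials in the family are dense. -/
theorem separableSpace_of_countable_separating {X ι : Type*} [TopologicalSpace X] [Countable ι]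
    (φ : ι → C(X, ℝ)) (hφ : ∀ x y : X, x ≠ y → ∃ i, φ i x ≠ φ i y) :
    SeparableSpace C(X, ℝ) := by
  have : Countable (MvPolynomial ι ℚ) := by
    rw [← Cardinal.mk_le_aleph0_iff]
    refine MvPolynomial.cardinalMk_le_max_lift.trans ?_
    simp
  have : ContinuousMul C(X, ℝ) := continuousMul_continuousMap_real X
  have : IsTopologicalSemiring C(X, ℝ) := ⟨⟩
  let B : Subalgebra ℚ C(X, ℝ) := (MvPolynomial.aeval φ).range
  have hB : (B : Set C(X, ℝ)).Countable := by
    rw [AlgHom.coe_range]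
    exact countable_range _
  have hconst : ∀ r : ℝ, algebraMap ℝ C(X, ℝ) r ∈ B.topologicalClosure := by
    intro r
    have hcont : Continuous (algebraMap ℝ C(X, ℝ)) := ContinuousMap.continuous_const'
    refine map_mem_closure hcont (Rat.denseRange_cast r) ?_
    rintro _ ⟨q, rfl⟩
    have hq : algebraMap ℝ C(X, ℝ) q = algebraMap ℚ C(X, ℝ) q := by
      ext x
      simp
    exact hq ▸ B.algebraMap_mem q
  let A : Subalgebra ℝ C(X, ℝ) :=
    { B.topologicalClosure with algebraMap_mem' := hconst }
  have hA : A.SeparatesPoints := by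
    intro x y hxy
    obtain ⟨i, hi⟩ := hφ x y hxy
    refine ⟨φ i, ⟨φ i, ?_, rfl⟩, hi⟩
    exact B.le_topologicalClosure ⟨MvPolynomial.X i, by simp⟩
  refine ⟨B, hB, fun f => ?_⟩
  suffices f ∈ closure (A : Set C(X, ℝ)) from closure_closure (s := (B : Set C(X, ℝ))) ▸ this
  rw [UniformSpace.mem_closure_iff_ball]
  intro V hV
  obtain ⟨⟨K, ε⟩, ⟨hK, hε⟩, hsub⟩ :=
    (Metric.uniformity_basis_dist (α := ℝ)).compactConvergenceUniformity.mem_iff.1 hV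
  obtain ⟨g, hgA, hg⟩ :=
    ContinuousMap.exists_mem_subalgebra_near_continuous_of_isCompact_of_separatesPoints
      hA f hK hε
  refine ⟨g, hsub fun x hx => ?_, hgA⟩
  rw [mem_ofPred_eq, dist_comm, dist_eq_norm]
  exact hg x hx

theorem exists_mem_apply_ne_of_dense {X : Type*} [TopologicalSpace X] [T35Space X]
    {D : Set C(X, ℝ)} (hD : Dense D) {x y : X} (hxy : x ≠ y) : ∃ f ∈ D, f x ≠ f y := by
  obtain ⟨f, hf, hfxy⟩ := separatesPoints_continuous_of_t35Space hxy
  have hopen : IsOpen {g : C(X, ℝ) | g x ≠ g y} :=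
    isOpen_ne_fun (continuous_eval_const x) (continuous_eval_const y)
  obtain ⟨g, hg, hgD⟩ := hD.inter_open_nonempty _ hopen ⟨⟨f, hf⟩, hfxy⟩
  exact ⟨g, hgD, hg⟩

theorem CountableIWeight.of_separableSpace (X : Type u) [TopologicalSpace X] [T35Space X]
    [SeparableSpace C(X, ℝ)] : CountableIWeight X := by
  obtain ⟨D, hDc, hD⟩ := exists_countable_dense C(X, ℝ)
  have := hDc.to_subtype
  let F : X → (D → ℝ) := fun x f => f.1 x
  have hF : Continuous F := continuous_pi fun f => f.1.continuous
  refine ⟨range F, inferInstance, inferInstance, inferInstance, rangeFactorization F,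
    hF.rangeFactorization, ?_, rangeFactorization_surjective⟩
  rw [rangeFactorization_injective]
  intro x y hxy
  by_contra hne
  obtain ⟨f, hf, hfxy⟩ := exists_mem_apply_ne_of_dense hD hne
  exact hfxy (congrFun hxy ⟨f, hf⟩)

theorem CountableIWeight.separableSpace {X : Type u} [TopologicalSpace X]
    (h : CountableIWeight X) : SeparableSpace C(X, ℝ) := by
  obtain ⟨Y, _, _, _, f, hf, hbij⟩ := h
  let _ := metrizableSpaceMetric Y
  obtain ⟨s, hsc, hs⟩ := exists_countable_dense Y
  have := hsc.to_subtype
  refine separableSpace_of_countable_separating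
    (fun a : s => (⟨fun x => dist (f x) a, by fun_prop⟩ : C(X, ℝ))) fun x y hxy => ?_
  by_contra! heq
  refine hxy (hbij.injective (dist_le_zero.1 ?_))
  have hdist : (fun z => dist (f x) z) = fun z => dist (f y) z :=
    Continuous.ext_on hs (by fun_prop) (by fun_prop) fun a ha => heq ⟨a, ha⟩
  simpa using (congrFun hdist (f y)).le

theorem statement2 (X : Type u) [TopologicalSpace X] [T35Space X] :
    TopologicalSpace.SeparableSpace C(X, ℝ) ↔ CountableIWeight X :=
  ⟨fun _ => CountableIWeight.of_separableSpace X, CountableIWeight.separableSpace⟩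
end

section
/- Let X be a Tychonoff space with iw(X) = ℵ₀. If the bitopological function space (C(X), τ_k, τ_p) satisfies S₁(𝒟^k, 𝒟^p) — i.e., for every sequence (D_n) of dense subsets of C_k(X) one can choose f_n ∈ D_n such that {f_n : n ∈ ℕ} is dense in C_p(X) — then X satisfies S₁(𝒦, Ω), i.e., for every sequence (𝒰_n) of open k-covers of X one can choose U_n ∈ 𝒰_n such that {U_n : n ∈ ℕ} is an ω-cover of X. -/
open Set Filter Topology TopologicalSpace

universe u

/-- In a completely regular space, a compact set and a closed set disjoint from it are separated
by a continuous real-valued function. -/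
theorem exists_continuousMap_zero_one_of_isCompact_subset_isOpen {X : Type*} [TopologicalSpace X]
    [CompletelyRegularSpace X] {K U : Set X} (hK : IsCompact K) (hU : IsOpen U) (hKU : K ⊆ U) :
    ∃ φ : C(X, ℝ), EqOn φ 0 K ∧ EqOn φ 1 Uᶜ := by
  obtain ⟨V, hV, rfl⟩ := isInducing_stoneCechUnit.isOpen_iff.1 hU
  obtain ⟨ψ, hψ0, hψ1, -⟩ := exists_continuous_zero_one_of_isClosed
    (hK.image continuous_stoneCechUnit).isClosed hV.isClosed_compl
    (disjoint_compl_right_iff_subset.2 (image_subset_iff.2 hKU))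
  exact ⟨ψ.comp ⟨stoneCechUnit, continuous_stoneCechUnit⟩,
    fun x hx => hψ0 (mem_image_of_mem _ hx), fun x hx => hψ1 hx⟩

/-- A family of continuous maps is dense in the compact-open topology if every continuous map
agrees on each compact set with a member of the family. -/
theorem ContinuousMap.dense_of_forall_exists_eqOn {X Y : Type*} [TopologicalSpace X]
    [TopologicalSpace Y] {D : Set C(X, Y)}
    (hD : ∀ (f : C(X, Y)) (K : Set X), IsCompact K → ∃ g ∈ D, EqOn g f K) : Dense D := by
  intro f
  rw [mem_closure_iff_nhds]
  intro N hN
  obtain ⟨S, hSfin, hS, hSN⟩ := ContinuousMap.mem_nhds_iff.1 hN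
  obtain ⟨g, hgD, hg⟩ := hD f (⋃ p ∈ S, p.1) (hSfin.isCompact_biUnion fun p hp => (hS p.1 p.2 hp).1)
  refine ⟨g, hSN fun K U hKU => ?_, hgD⟩
  exact (hS K U hKU).2.2.congr fun x hx => (hg (mem_biUnion hKU hx)).symm

/-- The functions equal to `1` off some member of a k-cover are dense in `C_k(X)`. -/
theorem IsKCover.dense_setOf_eqOn_one_compl {X : Type u} [TopologicalSpace X]
    [CompletelyRegularSpace X] {𝒰 : Set (Set X)} (h𝒰 : IsKCover 𝒰) :
    Dense {f : C(X, ℝ) | ∃ U ∈ 𝒰, EqOn f 1 Uᶜ} := by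
  refine ContinuousMap.dense_of_forall_exists_eqOn fun f K hK => ?_
  obtain ⟨U, hU, hKU⟩ := h𝒰.2.2.2 K hK
  obtain ⟨φ, hφ0, hφ1⟩ :=
    exists_continuousMap_zero_one_of_isCompact_subset_isOpen hK (h𝒰.1 U hU) hKU
  refine ⟨(1 - φ) * f + φ, ⟨U, hU, fun x hx => ?_⟩, fun x hx => ?_⟩
  · simp [hφ1 hx]
  · simp [hφ0 hx]

/-- A dense subset of `C_p(X)` contains, for each finite set, a function of absolute value less
than `1` on that set. -/
theorem exists_mem_abs_lt_one_of_dense_pointwise {X : Type u} [TopologicalSpace X]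
    {D : Set C(X, ℝ)} (hD : @Dense _ (pointwiseTopology X) D) {F : Set X} (hF : F.Finite) :
    ∃ f ∈ D, ∀ x ∈ F, |f x| < 1 := by
  have hopen : IsOpen[pointwiseTopology X] {f : C(X, ℝ) | ∀ x ∈ F, |f x| < 1} := by
    refine isOpen_induced_iff.2 ⟨F.pi fun _ => {y | |y| < 1}, ?_, rfl⟩
    exact isOpen_set_pi hF fun _ _ => isOpen_lt continuous_abs continuous_const
  obtain ⟨f, hf, hfD⟩ :=
    @Dense.inter_open_nonempty _ (pointwiseTopology X) D hD _ hopen ⟨0, by simp⟩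
  exact ⟨f, hfD, hf⟩

theorem statement3 (X : Type u) [TopologicalSpace X] [T35Space X]
    (hiw : CountableIWeight X)
    (h : S1sel {D : Set C(X, ℝ) | Dense D}
      {D : Set C(X, ℝ) | @Dense _ (pointwiseTopology X) D}) :
    S1sel {𝒰 : Set (Set X) | IsKCover 𝒰} {𝒰 : Set (Set X) | IsOmegaCover 𝒰} := by
  intro 𝒰 h𝒰
  obtain ⟨f, hf, hfdense⟩ := h (fun n => {f : C(X, ℝ) | ∃ U ∈ 𝒰 n, EqOn f 1 Uᶜ})
    fun n => (h𝒰 n).dense_setOf_eqOn_one_compl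
  choose U hU hfU using hf
  have hfin : ∀ F : Set X, F.Finite → ∃ V ∈ range U, F ⊆ V := by
    intro F hF
    obtain ⟨_, ⟨n, rfl⟩, hn⟩ := exists_mem_abs_lt_one_of_dense_pointwise hfdense hF
    refine ⟨U n, mem_range_self n, fun x hx => ?_⟩
    by_contra hxU
    simpa [hfU n hxU] using hn x hx
  refine ⟨U, hU, ?_, ?_, ?_, hfin⟩
  · rintro _ ⟨n, rfl⟩
    exact (h𝒰 n).1 _ (hU n)
  · refine eq_univ_of_forall fun x => ?_
    obtain ⟨V, hV, hxV⟩ := hfin {x} (finite_singleton x)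
    exact ⟨V, hV, hxV rfl⟩
  · rintro ⟨n, hn⟩
    exact (h𝒰 n).2.2.1 (hn ▸ hU n)
end

section
/- Let X be a Tychonoff space with iw(X) = ℵ₀. If X satisfies S₁(𝒦, Ω) — i.e., for every sequence (𝒰_n) of open k-covers of X one can choose U_n ∈ 𝒰_n such that {U_n : n ∈ ℕ} is an ω-cover of X — then the bitopological function space (C(X), τ_k, τ_p) satisfies S₁(Ω^k_0, Ω^p_0): for every sequence (A_n) of subsets of C(X) each having the constant zero function 0 in its closure in C_k(X) but with 0 ∉ A_n, one can choose f_n ∈ A_n such that 0 lies in the closure of {f_n : n ∈ ℕ} in C_p(X). -/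
open Set Filter Topology TopologicalSpace

universe u

/-- If `0` lies in the compact-open closure of `A`, then `A` contains functions that are
arbitrarily small on any given compact set. -/
lemma exists_abs_lt_on_compact {X : Type u} [TopologicalSpace X] {A : Set C(X, ℝ)}
    (hA : (0 : C(X, ℝ)) ∈ closure A) {K : Set X} (hK : IsCompact K) {ε : ℝ} (hε : 0 < ε) :
    ∃ f ∈ A, ∀ x ∈ K, |f x| < ε := by
  obtain ⟨f, hfK, hfA⟩ := mem_closure_iff.1 hA {f | MapsTo f K (Metric.ball 0 ε)}
    (ContinuousMap.isOpen_setOfPred_mapsTo hK Metric.isOpen_ball) (fun x _ => by simpa using hε)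
  exact ⟨f, hfA, fun x hx => by simpa using hfK hx⟩

/-- A criterion for `0` to lie in the pointwise closure of `A`. -/
lemma zero_mem_pointwise_closure {X : Type u} [TopologicalSpace X] {A : Set C(X, ℝ)}
    (hA : ∀ F : Set X, F.Finite → ∀ ε > 0, ∃ f ∈ A, ∀ x ∈ F, |f x| < ε) :
    (0 : C(X, ℝ)) ∈ @closure _ (pointwiseTopology X) A := by
  refine closure_induced.2 (mem_closure_iff_nhds.2 fun t ht => ?_)
  rw [nhds_pi] at ht
  obtain ⟨⟨F, ε⟩, ⟨hF, hε⟩, hsub⟩ := (hasBasis_pi fun x : X =>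
    Metric.nhds_basis_ball (x := (0 : C(X, ℝ)) x)).mem_iff.1 ht
  obtain ⟨δ, hδ, hδε⟩ : ∃ δ > 0, ∀ x ∈ F, δ ≤ ε x := by
    rcases F.eq_empty_or_nonempty with rfl | hne
    · exact ⟨1, one_pos, by simp⟩
    · obtain ⟨y, hy, hmin⟩ := hF.exists_minimalFor ε F hne
      exact ⟨ε y, hε y hy, fun x hx => (le_total (ε y) (ε x)).elim id (hmin hx)⟩
  obtain ⟨f, hfA, hf⟩ := hA F hF δ hδ
  refine ⟨f, hsub fun x hx => ?_, mem_image_of_mem _ hfA⟩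
  simpa using (hf x hx).trans_le (hδε x hx)

/-- Every finite set is contained in terms of arbitrarily large index of an enumerated
ω-cover. -/
lemma IsOmegaCover.exists_ge_subset {X : Type u} [TopologicalSpace X] {U : ℕ → Set X}
    (hU : IsOmegaCover (range U)) {F : Set X} (hF : F.Finite) (m : ℕ) :
    ∃ n ≥ m, F ⊆ U n := by
  have hne : ∀ n, ∃ x, x ∉ U n := fun n =>
    (ne_univ_iff_exists_notMem _).1 fun hn => hU.2.2.1 ⟨n, hn⟩
  choose x hx using hne
  obtain ⟨_, ⟨n, rfl⟩, hn⟩ := hU.2.2.2 (F ∪ x '' Iio m) (hF.union ((finite_Iio m).image x))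
  refine ⟨n, not_lt.1 fun hnm => hx n (hn (Or.inr ⟨n, hnm, rfl⟩)), ?_⟩
  exact subset_union_left.trans hn

theorem statement4 (X : Type u) [TopologicalSpace X] [T35Space X]
    (hiw : CountableIWeight X)
    (h : S1sel {𝒰 : Set (Set X) | IsKCover 𝒰} {𝒰 : Set (Set X) | IsOmegaCover 𝒰}) :
    S1sel {A : Set C(X, ℝ) | OmegaKZero X A}
      {A : Set C(X, ℝ) | (0 : C(X, ℝ)) ∈ @closure _ (pointwiseTopology X) A} := by
  intro A hA
  have hpos : ∀ n : ℕ, (0 : ℝ) < 1 / (n + 1) := fun n => Nat.one_div_pos_of_nat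
  have hne : ∀ n, ∃ f, f ∈ A n := fun n =>
    (exists_abs_lt_on_compact (hA n).2 isCompact_empty one_pos).imp fun _ hf => hf.1
  choose g hg using hne
  suffices hb : ∃ b : ℕ → C(X, ℝ), (∀ n, b n ∈ A n) ∧ ∀ F : Set X, F.Finite → ∀ m : ℕ,
      ∃ n ≥ m, ∀ x ∈ F, |b n x| < 1 / ((n : ℝ) + 1) by
    obtain ⟨b, hbA, hb⟩ := hb
    refine ⟨b, hbA, zero_mem_pointwise_closure fun F hF ε hε => ?_⟩
    obtain ⟨m, hm⟩ := exists_nat_one_div_lt hε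
    obtain ⟨n, hmn, hn⟩ := hb F hF m
    exact ⟨b n, mem_range_self n, fun x hx =>
      (hn x hx).trans ((Nat.one_div_le_one_div hmn).trans_lt hm)⟩
  by_cases hfreq : ∃ᶠ n : ℕ in atTop, ∃ f ∈ A n, ∀ x, |f x| < 1 / ((n : ℝ) + 1)
  · have hsel : ∀ n : ℕ, ∃ f ∈ A n, (∃ f ∈ A n, ∀ x, |f x| < 1 / ((n : ℝ) + 1)) →
        ∀ x, |f x| < 1 / ((n : ℝ) + 1) := fun n => by
      by_cases hn : ∃ f ∈ A n, ∀ x, |f x| < 1 / ((n : ℝ) + 1)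
      · obtain ⟨f, hf, hfx⟩ := hn
        exact ⟨f, hf, fun _ => hfx⟩
      · exact ⟨g n, hg n, fun h => (hn h).elim⟩
    choose b hbA hb using hsel
    refine ⟨b, hbA, fun F _ m => ?_⟩
    obtain ⟨n, hmn, hn⟩ := frequently_atTop.1 hfreq m
    exact ⟨n, hmn, fun x _ => hb n hn x⟩
  · obtain ⟨N, hN⟩ := eventually_atTop.1 (not_frequently.1 hfreq)
    let V : ℕ → C(X, ℝ) → Set X := fun n f => {x | |f x| < 1 / ((n : ℝ) + 1)}
    have hcover : ∀ k, IsKCover (V (N + k) '' A (N + k)) := fun k => by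
      have hK : ∀ K : Set X, IsCompact K → ∃ U ∈ V (N + k) '' A (N + k), K ⊆ U := fun K hK => by
        obtain ⟨f, hf, hfK⟩ := exists_abs_lt_on_compact (hA (N + k)).2 hK (hpos (N + k))
        exact ⟨_, mem_image_of_mem _ hf, hfK⟩
      refine ⟨?_, eq_univ_of_forall fun x => ?_, ?_, hK⟩
      · rintro _ ⟨f, -, rfl⟩
        exact isOpen_lt f.continuous.abs continuous_const
      · obtain ⟨U, hU, hxU⟩ := hK {x} isCompact_singleton
        exact ⟨U, hU, hxU rfl⟩
      · rintro ⟨f, hf, hfu⟩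
        exact hN (N + k) (Nat.le_add_right N k) ⟨f, hf, fun x => (eq_univ_iff_forall.1 hfu x :)⟩
    obtain ⟨U, hUmem, hU⟩ := h _ hcover
    choose f hfA hfU using hUmem
    refine ⟨fun n => if N ≤ n then f (n - N) else g n, fun n => ?_, fun F hF m => ?_⟩
    · by_cases hn : N ≤ n
      · simpa [hn] using hfA (n - N)
      · simpa [hn] using hg n
    · obtain ⟨k, hmk, hk⟩ := IsOmegaCover.exists_ge_subset hU hF m
      refine ⟨N + k, by omega, fun x hx => ?_⟩
      have hxk : x ∈ V (N + k) (f k) := (hfU k).symm ▸ hk hx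
      simpa [V] using hxk
end

section
/- Let X be a Tychonoff space with iw(X) = ℵ₀. The bitopological function space (C(X), τ_k, τ_p) satisfies S_fin(𝒟^k, 𝒟^p) — i.e., for every sequence (D_n) of dense subsets of C_k(X) one can choose finite F_n ⊆ D_n such that ⋃_n F_n is dense in C_p(X) — if and only if X satisfies S_fin(𝒦, Ω), i.e., for every sequence (𝒰_n) of open k-covers of X one can choose finite 𝒱_n ⊆ 𝒰_n such that ⋃_n 𝒱_n is an ω-cover of X. -/
open Set Filter Topology TopologicalSpace

universe u

/-- Closure in the compact-open topology is approximation on compact sets. -/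
lemma mem_closure_compactOpen_iff {X : Type*} [TopologicalSpace X] {A : Set C(X, ℝ)}
    {g : C(X, ℝ)} :
    g ∈ closure A ↔
      ∀ K : Set X, IsCompact K → ∀ ε > 0, ∃ f ∈ A, ∀ x ∈ K, |f x - g x| < ε := by
  have hb := nhds_basis_uniformity'
    (Metric.uniformity_basis_dist.compactConvergenceUniformity (α := X) (β := ℝ)) (x := g)
  rw [mem_closure_iff_nhds_basis hb]
  constructor
  · intro h K hK ε hε
    obtain ⟨f, hfA, hf⟩ := h (i := (K, ε)) ⟨hK, hε⟩
    refine ⟨f, hfA, fun x hx => ?_⟩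
    have := hf x hx
    rwa [mem_ofPred_eq, dist_comm, Real.dist_eq] at this
  · rintro h ⟨K, ε⟩ ⟨hK, hε⟩
    obtain ⟨f, hfA, hf⟩ := h K hK ε hε
    refine ⟨f, hfA, fun x hx => ?_⟩
    rw [mem_ofPred_eq, dist_comm, Real.dist_eq]
    exact hf x hx

/-- Closure in the topology of pointwise convergence is approximation on finite sets. -/
lemma mem_closure_pointwiseTopology_iff {X : Type u} [TopologicalSpace X] {A : Set C(X, ℝ)}
    {g : C(X, ℝ)} :
    g ∈ @closure _ (pointwiseTopology X) A ↔
      ∀ F : Set X, F.Finite → ∀ ε > 0, ∃ f ∈ A, ∀ x ∈ F, |f x - g x| < ε := by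
  rw [show g ∈ @closure _ (pointwiseTopology X) A ↔
      (g : X → ℝ) ∈ closure ((fun f : C(X, ℝ) => (f : X → ℝ)) '' A) from closure_induced,
    mem_closure_iff_nhds]
  constructor
  · intro h F hF ε hε
    obtain ⟨_, hf, f, hfA, rfl⟩ := h (F.pi fun x => Metric.ball (g x) ε)
      (set_pi_mem_nhds hF fun x _ => Metric.ball_mem_nhds _ hε)
    exact ⟨f, hfA, fun x hx => by simpa [Real.dist_eq] using hf x hx⟩
  · intro h t ht
    rw [nhds_pi, Filter.mem_pi] at ht
    obtain ⟨F, hF, s, hs, hst⟩ := ht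
    choose r hr hrs using fun x => Metric.mem_nhds_iff.1 (hs x)
    obtain ⟨ε, hε, hεr⟩ : ∃ ε > 0, ∀ x ∈ F, ε ≤ r x := by
      rcases F.eq_empty_or_nonempty with rfl | hne
      · exact ⟨1, one_pos, by simp⟩
      · obtain ⟨a, -, ha⟩ := F.exists_min_image r hF hne
        exact ⟨r a, hr a, ha⟩
    obtain ⟨f, hfA, hf⟩ := h F hF ε hε
    refine ⟨f, hst fun x hx => hrs x ?_, f, hfA, rfl⟩
    rw [Metric.mem_ball, Real.dist_eq]
    exact (hf x hx).trans_le (hεr x hx)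

/-- In a Tychonoff space a compact set and the complement of an open neighbourhood of it are
separated by a continuous function. -/
lemma exists_continuousMap_eqOn_one_zero {X : Type*} [TopologicalSpace X] [T35Space X]
    {K U : Set X} (hK : IsCompact K) (hU : IsOpen U) (hKU : K ⊆ U) :
    ∃ h : C(X, ℝ), (∀ x ∈ K, h x = 1) ∧ ∀ x ∉ U, h x = 0 := by
  obtain ⟨V, hV, rfl⟩ := (isInducing_stoneCechUnit (X := X)).isOpen_iff.1 hU
  have hK' : IsClosed (stoneCechUnit '' K) := (hK.image continuous_stoneCechUnit).isClosed
  obtain ⟨f, hf0, hf1, -⟩ := exists_continuous_zero_one_of_isClosed hV.isClosed_compl hK'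
    (Set.disjoint_compl_left_iff_subset.2 (image_subset_iff.2 hKU))
  exact ⟨f.comp ⟨stoneCechUnit, continuous_stoneCechUnit⟩,
    fun x hx => hf1 (mem_image_of_mem _ hx), fun x hx => hf0 hx⟩

/-- A space of countable `i`-weight has a countable dense set of continuous functions for the
topology of pointwise convergence. -/
lemma CountableIWeight.exists_seq_approx {X : Type u} [TopologicalSpace X] [T35Space X]
    (hiw : CountableIWeight X) :
    ∃ q : ℕ → C(X, ℝ), ∀ (g : C(X, ℝ)) (F : Set X), F.Finite → ∀ ε > 0,
      ∃ n, ∀ x ∈ F, |q n x - g x| < ε := by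
  obtain ⟨Y, _, _, _, p, hp, hpb⟩ := hiw
  obtain ⟨e, he⟩ := exists_embedding_l_infty Y
  let φ : C(X, ℕ → unitInterval) :=
    ⟨fun x n => unitInterval.sigmoid (e (p x) n), continuous_pi fun n =>
      unitInterval.continuous_sigmoid.comp
        ((continuous_eval_const n).comp (he.continuous.comp hp))⟩
  have hφ : Function.Injective φ := fun x y hxy => hpb.1 <| he.injective <|
    DFunLike.ext _ _ fun n => unitInterval.sigmoid_strictMono.injective (congrFun hxy n)
  refine ⟨fun n => (denseSeq C(ℕ → unitInterval, ℝ) n).comp φ, fun g F hF ε hε => ?_⟩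
  have : Finite F := hF
  have hemb : IsClosedEmbedding (fun x : F => φ x) :=
    IsClosedEmbedding.of_continuous_injective_isClosedMap
      continuous_of_discreteTopology (hφ.comp Subtype.val_injective)
      fun s _ => (s.toFinite.image _).isClosed
  obtain ⟨h, hh⟩ := (g.restrict F).exists_extension' hemb
  obtain ⟨_, ⟨n, rfl⟩, hn⟩ := mem_closure_compactOpen_iff.1
    (denseRange_denseSeq C(ℕ → unitInterval, ℝ) h) _ (hF.image φ).isCompact ε hε
  refine ⟨n, fun x hx => ?_⟩
  have hx' : h (φ x) = g x := congrFun hh ⟨x, hx⟩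
  simpa [hx'] using hn (φ x) (mem_image_of_mem _ hx)

/-- `S_fin` for dense sets implies `S_fin` for covers. -/
lemma sfinSel_kCover_omegaCover_of_dense {X : Type u} [TopologicalSpace X] [T35Space X]
    (hS : SfinSel {D : Set C(X, ℝ) | Dense D}
      {D : Set C(X, ℝ) | @Dense _ (pointwiseTopology X) D}) :
    SfinSel {𝒰 : Set (Set X) | IsKCover 𝒰} {𝒰 : Set (Set X) | IsOmegaCover 𝒰} := by
  intro 𝒰 h𝒰
  obtain ⟨B, hB, hdense⟩ := hS (fun n => {f | ∃ U ∈ 𝒰 n, ∀ x ∉ U, f x = 1}) fun n g => by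
    refine mem_closure_compactOpen_iff.2 fun K hK ε hε => ?_
    obtain ⟨U, hU, hKU⟩ := (h𝒰 n).2.2.2 K hK
    obtain ⟨h, h1, h0⟩ := exists_continuousMap_eqOn_one_zero hK ((h𝒰 n).1 U hU) hKU
    exact ⟨h * g + (1 - h), ⟨U, hU, fun x hx => by simp [h0 x hx]⟩,
      fun x hx => by simpa [h1 x hx] using hε⟩
  choose! V hV𝒰 hV using fun n f (hf : f ∈ B n) => (hB n).2 hf
  have hω : ∀ F : Set X, F.Finite → ∃ U ∈ ⋃ n, V n '' B n, F ⊆ U := fun F hF => by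
    obtain ⟨f, hfB, hf⟩ := mem_closure_pointwiseTopology_iff.1 (hdense 0) F hF 1 one_pos
    obtain ⟨n, hn⟩ := mem_iUnion.1 hfB
    refine ⟨V n f, mem_iUnion.2 ⟨n, mem_image_of_mem _ hn⟩, fun x hx => ?_⟩
    by_contra hxV
    simpa [hV n f hn x hxV] using hf x hx
  have hsub : ∀ U ∈ ⋃ n, V n '' B n, ∃ n, U ∈ 𝒰 n := fun U hU => by
    obtain ⟨n, f, hf, rfl⟩ := mem_iUnion.1 hU
    exact ⟨n, hV𝒰 n f hf⟩
  refine ⟨fun n => V n '' B n, fun n => ⟨(hB n).1.image _, ?_⟩, ?_, ?_, ?_, hω⟩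
  · rintro _ ⟨f, hf, rfl⟩
    exact hV𝒰 n f hf
  · intro U hU
    obtain ⟨n, hn⟩ := hsub U hU
    exact (h𝒰 n).1 U hn
  · refine eq_univ_of_forall fun x => ?_
    obtain ⟨U, hU, hxU⟩ := hω {x} (finite_singleton x)
    exact ⟨U, hU, hxU rfl⟩
  · intro hU
    obtain ⟨n, hn⟩ := hsub _ hU
    exact (h𝒰 n).2.2.1 hn

/-- In an `ω`-cover decomposed into countably many finite pieces, every finite set is contained
in a member of a piece of arbitrarily large index. -/
lemma IsOmegaCover.exists_ge {X : Type u} [TopologicalSpace X] {V : ℕ → Set (Set X)}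
    (hV : ∀ n, (V n).Finite) (hω : IsOmegaCover (⋃ n, V n)) {F : Set X} (hF : F.Finite)
    (m : ℕ) : ∃ n ≥ m, ∃ U ∈ V n, F ⊆ U := by
  have hfin : (⋃ i ∈ Iio m, V i).Finite := (finite_Iio m).biUnion fun i _ => hV i
  have hne : ∀ U ∈ ⋃ i ∈ Iio m, V i, ∃ x, x ∉ U := fun U hU => by
    refine (ne_univ_iff_exists_notMem U).1 fun h => hω.2.2.1 ?_
    obtain ⟨i, -, hi⟩ := mem_iUnion₂.1 hU
    exact mem_iUnion.2 ⟨i, h ▸ hi⟩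
  have : Nonempty X := by
    by_contra hX
    rw [not_nonempty_iff] at hX
    obtain ⟨U, hU, -⟩ := hω.2.2.2 ∅ finite_empty
    exact hω.2.2.1 (Subsingleton.elim U univ ▸ hU)
  choose! x hx using hne
  obtain ⟨U, hU, hsub⟩ := hω.2.2.2 _ (hF.union (hfin.image x))
  obtain ⟨n, hn⟩ := mem_iUnion.1 hU
  refine ⟨n, not_lt.1 fun hnm => ?_, U, hn, subset_union_left.trans hsub⟩
  have hU' : U ∈ ⋃ i ∈ Iio m, V i := mem_iUnion₂.2 ⟨n, hnm, hn⟩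
  exact hx U hU' (hsub (Or.inr (mem_image_of_mem x hU')))

/-- If `X` satisfies `S_fin(𝒦, Ω)`, then from sets having `g` in their compact-open closures one
can select finite subsets whose union has `g` in its pointwise closure. -/
lemma exists_finite_mem_closure_pointwise {X : Type u} [TopologicalSpace X]
    (hS : SfinSel {𝒰 : Set (Set X) | IsKCover 𝒰} {𝒰 : Set (Set X) | IsOmegaCover 𝒰})
    (g : C(X, ℝ)) (A : ℕ → Set C(X, ℝ)) (hA : ∀ n, g ∈ closure (A n)) :
    ∃ B : ℕ → Set C(X, ℝ), (∀ n, (B n).Finite ∧ B n ⊆ A n) ∧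
      g ∈ @closure _ (pointwiseTopology X) (⋃ n, B n) := by
  suffices h : ∃ B : ℕ → Set C(X, ℝ), (∀ n, (B n).Finite ∧ B n ⊆ A n) ∧
      ∀ F : Set X, F.Finite → ∀ m : ℕ, ∃ n ≥ m, ∃ f ∈ B n, ∀ x ∈ F,
        |f x - g x| < 1 / ((n : ℝ) + 1) by
    obtain ⟨B, hB, h⟩ := h
    refine ⟨B, hB, mem_closure_pointwiseTopology_iff.2 fun F hF ε hε => ?_⟩
    obtain ⟨m, hm⟩ := exists_nat_one_div_lt hε
    obtain ⟨n, hmn, f, hf, hfx⟩ := h F hF m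
    exact ⟨f, mem_iUnion.2 ⟨n, hf⟩, fun x hx =>
      ((hfx x hx).trans_le (Nat.one_div_le_one_div hmn)).trans hm⟩
  let W : ℕ → C(X, ℝ) → Set X := fun n f => {x | |f x - g x| < 1 / ((n : ℝ) + 1)}
  by_cases hunif : ∀ m : ℕ, ∃ n ≥ m, ∃ f ∈ A n, W n f = univ
  · choose! N hN f hfA hf using hunif
    refine ⟨fun n => A n ∩ f '' {m | m ≤ n ∧ N m = n}, fun n => ⟨?_, inter_subset_left⟩,
      fun F _ m => ⟨N m, hN m, f m, ⟨hfA m, m, ⟨hN m, rfl⟩, rfl⟩, fun x _ => ?_⟩⟩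
    · exact (((finite_Iic n).subset fun m hm => hm.1).image f).inter_of_right _
    · have : x ∈ W (N m) (f m) := hf m ▸ mem_univ x
      exact this
  push Not at hunif
  obtain ⟨m₀, hm₀⟩ := hunif
  have hk : ∀ n, IsKCover (W (m₀ + n) '' A (m₀ + n)) := fun n => by
    have hcompact : ∀ K : Set X, IsCompact K → ∃ U ∈ W (m₀ + n) '' A (m₀ + n), K ⊆ U :=
      fun K hK => by
        obtain ⟨f, hf, hfK⟩ := mem_closure_compactOpen_iff.1 (hA (m₀ + n)) K hK
          (1 / (((m₀ + n : ℕ) : ℝ) + 1)) Nat.one_div_pos_of_nat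
        exact ⟨_, mem_image_of_mem _ hf, hfK⟩
    refine ⟨?_, eq_univ_of_forall fun x => ?_, ?_, hcompact⟩
    · rintro _ ⟨f, -, rfl⟩
      exact isOpen_lt (by fun_prop) continuous_const
    · obtain ⟨U, hU, hxU⟩ := hcompact {x} isCompact_singleton
      exact ⟨U, hU, hxU rfl⟩
    · rintro ⟨f, hf, hfu⟩
      exact hm₀ _ (Nat.le_add_right _ _) f hf hfu
  obtain ⟨V, hV, hω⟩ := hS _ hk
  choose! c hcA hcW using fun n U (hU : U ∈ V n) => (hV n).2 hU
  refine ⟨fun k => {f | m₀ ≤ k ∧ f ∈ c (k - m₀) '' V (k - m₀)}, fun k => ⟨?_, ?_⟩,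
    fun F hF m => ?_⟩
  · exact ((hV (k - m₀)).1.image _).subset fun f hf => hf.2
  · rintro f ⟨hk, U, hU, rfl⟩
    have := hcA (k - m₀) U hU
    rwa [Nat.add_sub_cancel' hk] at this
  · obtain ⟨n, hn, U, hU, hFU⟩ := hω.exists_ge (fun n => (hV n).1) hF m
    refine ⟨m₀ + n, hn.trans (Nat.le_add_left _ _), c n U, ⟨Nat.le_add_right _ _, ?_⟩,
      fun x hx => ?_⟩
    · rw [Nat.add_sub_cancel_left]
      exact mem_image_of_mem _ hU
    · have : x ∈ W (m₀ + n) (c n U) := (hcW n U hU).symm ▸ hFU hx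
      exact this

theorem statement10 (X : Type u) [TopologicalSpace X] [T35Space X]
    (hiw : CountableIWeight X) :
    SfinSel {D : Set C(X, ℝ) | Dense D}
      {D : Set C(X, ℝ) | @Dense _ (pointwiseTopology X) D} ↔
    SfinSel {𝒰 : Set (Set X) | IsKCover 𝒰} {𝒰 : Set (Set X) | IsOmegaCover 𝒰} := by
  refine ⟨sfinSel_kCover_omegaCover_of_dense, fun hS D hD => ?_⟩
  obtain ⟨q, hq⟩ := hiw.exists_seq_approx
  choose B hB hqB using fun m =>
    exists_finite_mem_closure_pointwise hS (q m) (fun n => D (Nat.pair m n)) fun n => hD _ _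
  refine ⟨fun k => B k.unpair.1 k.unpair.2, fun k => ?_, fun g =>
    mem_closure_pointwiseTopology_iff.2 fun F hF ε hε => ?_⟩
  · simpa using hB k.unpair.1 k.unpair.2
  · obtain ⟨m, hm⟩ := hq g F hF (ε / 2) (half_pos hε)
    obtain ⟨f, hf, hfq⟩ :=
      mem_closure_pointwiseTopology_iff.1 (hqB m) F hF (ε / 2) (half_pos hε)
    obtain ⟨n, hn⟩ := mem_iUnion.1 hf
    refine ⟨f, mem_iUnion.2 ⟨Nat.pair m n, by simpa using hn⟩, fun x hx => ?_⟩
    calc |f x - g x| ≤ |f x - q m x| + |q m x - g x| := abs_sub_le _ _ _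
      _ < ε / 2 + ε / 2 := add_lt_add (hfq x hx) (hm x hx)
      _ = ε := add_halves ε
end

section
/- Let X be a Tychonoff space with iw(X) = ℵ₀. The bitopological function space (C(X), τ_k, τ_p) satisfies S_fin(𝒟^k, 𝒟^p) if and only if it satisfies S_fin(𝒟^k, Ω^p_0): for every sequence (D_n) of dense subsets of C_k(X) one can choose finite F_n ⊆ D_n such that the constant zero function 0 lies in the closure of ⋃_n F_n in C_p(X). -/
open Set Filter Topology TopologicalSpace

universe u

theorem mem_closure_pointwiseTopology {X : Type u} [TopologicalSpace X] {A : Set C(X, ℝ)}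
    {g : C(X, ℝ)} :
    g ∈ @closure _ (pointwiseTopology X) A ↔
      ∀ (I : Set X) (ε : X → ℝ), I.Finite → (∀ x ∈ I, 0 < ε x) →
        ∃ h ∈ A, ∀ x ∈ I, dist (h x) (g x) < ε x := by
  unfold pointwiseTopology
  rw [closure_induced, mem_closure_iff_nhds_basis
    (nhds_pi (a := (g : X → ℝ)) ▸ hasBasis_pi fun x => Metric.nhds_basis_ball)]
  simp only [Set.exists_mem_image, Set.mem_pi, Metric.mem_ball, Prod.forall, and_imp]

/-- The ramp function equal to `1` where `k * d ≤ 1` and to `0` where `2 ≤ k * d`. -/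
def ramp (k d : ℝ) : ℝ := min 1 (max 0 (2 - k * d))

theorem ramp_eq_one {k d : ℝ} (h : k * d ≤ 1) : ramp k d = 1 := by
  rw [ramp, min_eq_left]
  exact le_max_of_le_right (by linarith)

theorem ramp_eq_zero {k d : ℝ} (h : 2 ≤ k * d) : ramp k d = 0 := by
  rw [ramp, max_eq_left (by linarith), min_eq_right zero_le_one]

/-- A space with a continuous injection into a second-countable regular space carries a countable
family of continuous functions that isolates each point from any finite set. -/
theorem CountableIWeight.exists_countable_isolating {X : Type u} [TopologicalSpace X]
    (hiw : CountableIWeight X) :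
    ∃ G : Set C(X, ℝ), G.Countable ∧ ∀ (I : Set X), I.Finite → ∀ x : X,
      ∃ e ∈ G, e x = 1 ∧ ∀ y ∈ I, y ≠ x → e y = 0 := by
  obtain ⟨Y, _, _, _, f, hf, hbij⟩ := hiw
  let _ : MetricSpace Y := TopologicalSpace.metrizableSpaceMetric Y
  obtain ⟨S, hSc, hSd⟩ := TopologicalSpace.exists_countable_dense Y
  have : Countable S := hSc.to_subtype
  let e : S × ℕ → C(X, ℝ) := fun p =>
    ⟨fun x => ramp p.2 (dist (f x) p.1), by unfold ramp; fun_prop⟩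
  refine ⟨Set.range e, Set.countable_range e, fun I hI x => ?_⟩
  have hsep : ∃ k : ℕ, 0 < k ∧ ∀ y ∈ I, y ≠ x → 3 ≤ k * dist (f y) (f x) := by
    have : ∀ᶠ k : ℕ in atTop, ∀ y ∈ I, y ≠ x → 3 ≤ k * dist (f y) (f x) := by
      refine (eventually_all_finite hI).2 fun y _ => ?_
      by_cases hyx : y = x
      · simp [hyx]
      · have hpos : 0 < dist (f y) (f x) := dist_pos.2 (hbij.1.ne hyx)
        filter_upwards [(tendsto_natCast_atTop_atTop.atTop_mul_const hpos).eventually_ge_atTop 3]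
          with k hk _ using hk
    obtain ⟨k, hk, hk0⟩ := (this.and (eventually_gt_atTop 0)).exists
    exact ⟨k, hk0, hk⟩
  obtain ⟨k, hk0, hk⟩ := hsep
  have hk0' : (0 : ℝ) < k := by exact_mod_cast hk0
  obtain ⟨s, hsS, hs⟩ := hSd.exists_dist_lt (f x) (inv_pos.2 hk0')
  have hks : k * dist (f x) s < 1 := by
    simpa [hk0'.ne'] using mul_lt_mul_of_pos_left hs hk0'
  refine ⟨e (⟨s, hsS⟩, k), ⟨_, rfl⟩, ramp_eq_one hks.le, fun y hy hyx => ramp_eq_zero ?_⟩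
  have htri := mul_le_mul_of_nonneg_left (dist_triangle_right (f y) (f x) s) hk0'.le
  have := hk y hy hyx
  change 2 ≤ (k : ℝ) * dist (f y) s
  linarith

/-- `C_p(X)` is separable when `X` has countable `i`-weight. -/
theorem CountableIWeight.exists_countable_dense {X : Type u} [TopologicalSpace X]
    (hiw : CountableIWeight X) :
    ∃ S : Set C(X, ℝ), S.Countable ∧ @Dense _ (pointwiseTopology X) S := by
  obtain ⟨G, hGc, hG⟩ := hiw.exists_countable_isolating
  have : Countable G := hGc.to_subtype
  let L : (G →₀ ℚ) → C(X, ℝ) := Finsupp.linearCombination ℚ ((↑) : G → C(X, ℝ))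
  refine ⟨Set.range L, Set.countable_range L, fun g => ?_⟩
  refine mem_closure_pointwiseTopology.2 fun I ε hI hε => ?_
  choose e heG he1 he0 using hG I hI
  have hq : ∀ x ∈ I, ∃ q : ℚ, dist (q : ℝ) (g x) < ε x := fun x hx => by
    obtain ⟨q, hq⟩ := Rat.denseRange_cast.exists_dist_lt (g x) (hε x hx)
    exact ⟨q, by rwa [dist_comm]⟩
  choose! q hq using hq
  refine ⟨∑ y ∈ hI.toFinset, q y • e y,
    ⟨∑ y ∈ hI.toFinset, Finsupp.single ⟨e y, heG y⟩ (q y), by simp [L]⟩, fun x hx => ?_⟩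
  have hval : (∑ y ∈ hI.toFinset, q y • e y) x = q x := by
    rw [ContinuousMap.sum_apply, Finset.sum_eq_single x]
    · simp [he1, Rat.smul_def]
    · intro y _ hyx
      simp [he0 y x hx hyx.symm]
    · simp [hx]
  rw [hval]
  exact hq x hx

/-- Translating a selection principle at `0` to an arbitrary function. -/
theorem exists_finite_selection_mem_closure {X : Type u} [TopologicalSpace X]
    (h : SfinSel {D : Set C(X, ℝ) | Dense D}
      {A : Set C(X, ℝ) | (0 : C(X, ℝ)) ∈ @closure _ (pointwiseTopology X) A})
    (g : C(X, ℝ)) (D : ℕ → Set C(X, ℝ)) (hD : ∀ n, Dense (D n)) :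
    ∃ B : ℕ → Set C(X, ℝ), (∀ n, (B n).Finite ∧ B n ⊆ D n) ∧
      g ∈ @closure _ (pointwiseTopology X) (⋃ n, B n) := by
  obtain ⟨B, hB, h0⟩ := h (fun n => (fun f => f - g) '' D n) fun n =>
    (Homeomorph.subRight g).surjective.denseRange.dense_image
      (Homeomorph.subRight g).continuous (hD n)
  refine ⟨fun n => (fun f => f + g) '' B n, fun n => ⟨(hB n).1.image _, ?_⟩, ?_⟩
  · rintro _ ⟨b, hb, rfl⟩
    obtain ⟨f, hf, rfl⟩ := (hB n).2 hb
    simpa using hf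
  · refine mem_closure_pointwiseTopology.2 fun I ε hI hε => ?_
    obtain ⟨b, hb, hbI⟩ := mem_closure_pointwiseTopology.1 h0 I ε hI hε
    refine ⟨b + g, ?_, fun x hx => by simpa using hbI x hx⟩
    rw [← Set.image_iUnion]
    exact Set.mem_image_of_mem _ hb

theorem statement11 (X : Type u) [TopologicalSpace X] [T35Space X]
    (hiw : CountableIWeight X) :
    SfinSel {D : Set C(X, ℝ) | Dense D}
      {D : Set C(X, ℝ) | @Dense _ (pointwiseTopology X) D} ↔
    SfinSel {D : Set C(X, ℝ) | Dense D}
      {A : Set C(X, ℝ) | (0 : C(X, ℝ)) ∈ @closure _ (pointwiseTopology X) A} := by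
  refine ⟨fun h D hD => ?_, fun h D hD => ?_⟩
  · obtain ⟨B, hB, hdense⟩ := h D hD
    exact ⟨B, hB, hdense 0⟩
  · obtain ⟨S, hSc, hSd⟩ := hiw.exists_countable_dense
    have hSne : S.Nonempty := @Dense.nonempty _ (pointwiseTopology X) _ _ hSd
    obtain ⟨d, rfl⟩ := hSc.exists_eq_range hSne
    choose B hB hcl using fun m =>
      exists_finite_selection_mem_closure h (d m) (fun n => D (Nat.pair m n)) fun n => hD _
    refine ⟨fun i => B i.unpair.1 i.unpair.2, fun i => ?_, ?_⟩
    · simpa using hB i.unpair.1 i.unpair.2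
    · refine (@dense_closure _ (pointwiseTopology X) _).1
        (@Dense.mono _ (pointwiseTopology X) _ _ ?_ hSd)
      rintro _ ⟨m, rfl⟩
      refine (@closure_mono _ (pointwiseTopology X) _ _ (Set.iUnion_subset fun n => ?_)) (hcl m)
      exact Set.subset_iUnion_of_subset (Nat.pair m n) (by simp)
end

section
/- Let X be a Tychonoff space. If X satisfies S_fin(𝒦, Ω) — i.e., for every sequence (𝒰_n) of open k-covers of X one can choose finite 𝒱_n ⊆ 𝒰_n such that ⋃_n 𝒱_n is an ω-cover of X — then player ONE has no winning strategy in the game G_fin(𝒦, Ω). -/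
open Set Filter Topology TopologicalSpace

universe u

/-- The sets contained in a member of one of the families in the list `h`. -/
def coveredBy {X : Type u} (h : List (Set (Set X))) : Set (Set X) :=
  {F | ∃ B ∈ h, ∃ V ∈ B, F ⊆ V}

/-- Given replies `E h k` (`k : ℕ`) of player TWO to each history `h`, the sets that are certain to
be covered when, starting from `h`, TWO uses arbitrary indices for `n` rounds and then `k`.
Indices `j ≥ k` need not be intersected over when `E` is monotone in the index. -/
def surelyCovered {X : Type u} (E : List (Set (Set X)) → ℕ → Set (Set X)) :
    ℕ → ℕ → List (Set (Set X)) → Set (Set X)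
  | 0, k, h => coveredBy (h ++ [E h k])
  | n + 1, k, h => coveredBy (h ++ [E h k]) ∩
      ⋂ j ∈ Set.Iio k, surelyCovered E n k (h ++ [E h j])

/-- The history of the play in which TWO uses the index `f n` in round `n`. -/
def historyOf {X : Type u} (E : List (Set (Set X)) → ℕ → Set (Set X)) (f : ℕ → ℕ) :
    ℕ → List (Set (Set X))
  | 0 => []
  | n + 1 => historyOf E f n ++ [E (historyOf E f n) (f n)]

section

variable {X : Type u} {E : List (Set (Set X)) → ℕ → Set (Set X)}

theorem coveredBy_append_left {h l : List (Set (Set X))} : coveredBy h ⊆ coveredBy (h ++ l) :=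
  fun _ ⟨B, hB, hV⟩ => ⟨B, List.mem_append_left l hB, hV⟩

theorem coveredBy_append_mono (hE : ∀ h, Monotone (E h)) (h : List (Set (Set X))) {j k : ℕ}
    (hjk : j ≤ k) : coveredBy (h ++ [E h j]) ⊆ coveredBy (h ++ [E h k]) := by
  rintro F ⟨B, hB, V, hV, hF⟩
  rcases List.mem_append.1 hB with hB | hB
  · exact ⟨B, List.mem_append_left _ hB, V, hV, hF⟩
  · rw [List.mem_singleton] at hB
    subst hB
    exact ⟨E h k, by simp, V, hE h hjk hV, hF⟩

theorem coveredBy_subset_surelyCovered (n k : ℕ) (h : List (Set (Set X))) :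
    coveredBy h ⊆ surelyCovered E n k h := by
  induction n generalizing h with
  | zero => exact coveredBy_append_left
  | succ n ih =>
    exact subset_inter coveredBy_append_left
      (subset_iInter₂ fun j _ => coveredBy_append_left.trans (ih _))

theorem surelyCovered_mono (hE : ∀ h, Monotone (E h)) (n : ℕ) (h : List (Set (Set X))) :
    Monotone fun k => surelyCovered E n k h := by
  induction n generalizing h with
  | zero => exact fun j k hjk => coveredBy_append_mono hE h hjk
  | succ n ih =>
    rintro k k' hk F ⟨hF, hF'⟩
    refine ⟨coveredBy_append_mono hE h hk hF, mem_iInter₂.2 fun j _ => ?_⟩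
    rcases lt_or_ge j k with hjk | hjk
    · exact ih _ hk (mem_iInter₂.1 hF' j hjk)
    · exact coveredBy_subset_surelyCovered n k' _ (coveredBy_append_mono hE h hjk hF)

theorem exists_mem_surelyCovered (hE : ∀ h, Monotone (E h)) {F : Set X}
    (hF : ∀ h, ∃ k, ∃ V ∈ E h k, F ⊆ V) (n : ℕ) (h : List (Set (Set X))) :
    ∃ k, F ∈ surelyCovered E n k h := by
  have base (h : List (Set (Set X))) : ∃ k, F ∈ coveredBy (h ++ [E h k]) := by
    obtain ⟨k, V, hV, hFV⟩ := hF h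
    exact ⟨k, E h k, by simp, V, hV, hFV⟩
  induction n generalizing h with
  | zero => exact base h
  | succ n ih =>
    obtain ⟨k₀, hk₀⟩ := base h
    choose g hg using fun j => ih (h ++ [E h j])
    obtain ⟨k₁, hk₁⟩ := ((Set.finite_Iio k₀).image g).bddAbove
    refine ⟨max k₀ k₁, coveredBy_append_mono hE h (le_max_left _ _) hk₀,
      mem_iInter₂.2 fun j _ => ?_⟩
    rcases lt_or_ge j k₀ with hj | hj
    · exact surelyCovered_mono hE n _
        ((hk₁ (mem_image_of_mem g hj)).trans (le_max_right _ _)) (hg j)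
    · exact coveredBy_subset_surelyCovered n _ _ (coveredBy_append_mono hE h hj hk₀)

theorem coveredBy_historyOf_mono (f : ℕ → ℕ) : Monotone fun n => coveredBy (historyOf E f n) :=
  monotone_nat_of_le_succ fun _ => coveredBy_append_left

theorem coveredBy_historyOf_of_mem_surelyCovered (hE : ∀ h, Monotone (E h)) (f : ℕ → ℕ)
    {F : Set X} (n m : ℕ) (hF : F ∈ surelyCovered E n (f (m + n)) (historyOf E f m)) :
    F ∈ coveredBy (historyOf E f (m + n + 1)) := by
  induction n generalizing m with
  | zero => exact hF
  | succ n ih =>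
    rw [show m + (n + 1) = m + 1 + n by omega] at hF ⊢
    obtain ⟨hF, hF'⟩ := hF
    rcases lt_or_ge (f m) (f (m + 1 + n)) with hlt | hge
    · exact ih (m + 1) (mem_iInter₂.1 hF' (f m) hlt)
    · exact coveredBy_historyOf_mono f (by omega : m + 1 ≤ m + 1 + n + 1)
        (coveredBy_append_mono hE _ hge hF)

theorem historyOf_eq_ofFn (f : ℕ → ℕ) (n : ℕ) :
    historyOf E f n = List.ofFn fun i : Fin n => E (historyOf E f i) (f i) := by
  induction n with
  | zero => simp [historyOf]
  | succ n ih =>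
    rw [List.ofFn_succ_last, historyOf]
    conv_lhs => rw [ih]
    simp [← ih]

variable [TopologicalSpace X]

theorem isOpen_setOf_range_mem_coveredBy {ι : Type*} [Finite ι] {h : List (Set (Set X))}
    (ho : ∀ B ∈ h, ∀ V ∈ B, IsOpen V) : IsOpen {x : ι → X | range x ∈ coveredBy h} := by
  have : {x : ι → X | range x ∈ coveredBy h} =
      ⋃ B ∈ h, ⋃ V ∈ B, Set.pi univ fun _ : ι => V := by
    ext x
    simp [coveredBy, range_subset_iff]
  rw [this]
  exact isOpen_biUnion fun B hB => isOpen_biUnion fun V hV =>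
    isOpen_set_pi finite_univ fun _ _ => ho B hB V hV

theorem isOpen_setOf_range_mem_surelyCovered {ι : Type*} [Finite ι]
    (hEo : ∀ h k, ∀ V ∈ E h k, IsOpen V) (n k : ℕ) {h : List (Set (Set X))}
    (ho : ∀ B ∈ h, ∀ V ∈ B, IsOpen V) :
    IsOpen {x : ι → X | range x ∈ surelyCovered E n k h} := by
  have step {h : List (Set (Set X))} (ho : ∀ B ∈ h, ∀ V ∈ B, IsOpen V) (j : ℕ) :
      ∀ B ∈ h ++ [E h j], ∀ V ∈ B, IsOpen V := by
    intro B hB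
    rcases List.mem_append.1 hB with hB | hB
    · exact ho B hB
    · rw [List.mem_singleton] at hB
      exact hB ▸ hEo h j
  induction n generalizing h with
  | zero => exact isOpen_setOf_range_mem_coveredBy (step ho k)
  | succ n ih =>
    have : {x : ι → X | range x ∈ surelyCovered E (n + 1) k h} =
        {x | range x ∈ coveredBy (h ++ [E h k])} ∩
          ⋂ j ∈ Set.Iio k, {x | range x ∈ surelyCovered E n k (h ++ [E h j])} := by
      ext x
      simp [surelyCovered]
    rw [this]
    exact (isOpen_setOf_range_mem_coveredBy (step ho k)).inter
      ((Set.finite_Iio k).isOpen_biInter fun j _ => ih (step ho j))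

/-- A tube lemma for finite powers of a compact set. -/
theorem IsCompact.exists_isOpen_pow_subset {K : Set X} (hK : IsCompact K) (n : ℕ)
    {O : Set (Fin n → X)} (hO : IsOpen O) (hKO : ∀ x : Fin n → X, (∀ i, x i ∈ K) → x ∈ O) :
    ∃ W, IsOpen W ∧ K ⊆ W ∧ ∀ x : Fin n → X, (∀ i, x i ∈ W) → x ∈ O := by
  induction n with
  | zero =>
    exact ⟨univ, isOpen_univ, subset_univ K, fun x _ => hKO x fun i => i.elim0⟩
  | succ n ih =>
    have hc : Continuous fun p : X × (Fin n → X) => (Fin.cons p.1 p.2 : Fin (n + 1) → X) :=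
      Continuous.finCons (A := fun _ => X) continuous_fst continuous_snd
    obtain ⟨V, O', hV, hO', hKV, hKO', hsub⟩ := generalized_tube_lemma hK
      (isCompact_univ_pi fun _ : Fin n => hK) (hO.preimage hc) (by
        rintro ⟨a, x⟩ ⟨ha, hx⟩
        exact hKO _ (Fin.cases ha fun i => hx i (mem_univ i)))
    obtain ⟨W, hW, hKW, hWO⟩ := ih hO' fun x hx => hKO' fun i _ => hx i
    refine ⟨V ∩ W, hV.inter hW, subset_inter hKV hKW, fun x hx => ?_⟩
    have := @hsub (x 0, Fin.tail x) ⟨(hx 0).1, hWO _ fun i => (hx i.succ).2⟩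
    simpa using this

/-- If `S_fin(𝒦, Ω)` holds, every k-cover has an increasing sequence of finite subfamilies whose
union is an ω-cover. -/
theorem SfinSel.exists_monotone_finite
    (h : SfinSel {𝒰 : Set (Set X) | IsKCover 𝒰} {𝒰 : Set (Set X) | IsOmegaCover 𝒰})
    {𝒰 : Set (Set X)} (h𝒰 : IsKCover 𝒰) :
    ∃ e : ℕ → Set (Set X), Monotone e ∧ (∀ k, (e k).Finite ∧ e k ⊆ 𝒰) ∧
      ∀ F : Set X, F.Finite → ∃ k, ∃ V ∈ e k, F ⊆ V := by
  obtain ⟨B, hB, -, -, -, hω⟩ := h (fun _ => 𝒰) fun _ => h𝒰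
  refine ⟨Set.accumulate B, Set.monotone_accumulate, fun k => ⟨?_, ?_⟩, fun F hF => ?_⟩
  · exact (Set.finite_Iic k).biUnion fun i _ => (hB i).1
  · exact iUnion₂_subset fun i _ => (hB i).2
  · obtain ⟨V, hV, hFV⟩ := hω F hF
    obtain ⟨k, hk⟩ := mem_iUnion.1 hV
    exact ⟨k, V, Set.subset_accumulate hk, hFV⟩

/-- Under `S_fin(𝒦, Ω)` one can select finite subfamilies so that every finite set is contained
in selected sets with arbitrarily large index. -/
theorem SfinSel.exists_frequently
    (h : SfinSel {𝒰 : Set (Set X) | IsKCover 𝒰} {𝒰 : Set (Set X) | IsOmegaCover 𝒰})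
    {C : ℕ → Set (Set X)} (hC : ∀ n, IsKCover (C n)) :
    ∃ D : ℕ → Set (Set X), (∀ n, (D n).Finite ∧ D n ⊆ C n) ∧
      ∀ F : Set X, F.Finite → ∀ m, ∃ n ≥ m, ∃ W ∈ D n, F ⊆ W := by
  choose B hB hω using fun m => h (fun n => C (m + n)) fun n => hC (m + n)
  refine ⟨fun n => ⋃ m ∈ Set.Iic n, B m (n - m), fun n => ⟨?_, ?_⟩, fun F hF m => ?_⟩
  · exact (Set.finite_Iic n).biUnion fun m _ => (hB m _).1
  · refine iUnion₂_subset fun m hm => (hB m _).2.trans_eq ?_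
    rw [Nat.add_sub_cancel' hm]
  · obtain ⟨W, hW, hFW⟩ := (hω m).2.2.2 F hF
    obtain ⟨n, hn⟩ := mem_iUnion.1 hW
    refine ⟨m + n, Nat.le_add_right m n, W, ?_, hFW⟩
    exact mem_iUnion₂.2 ⟨m, Nat.le_add_right m n, by simpa using hn⟩

/-- If the sets `S k` of finite tuples are open, increase with `k`, and cover, then there is a
k-cover each of whose members has its finite power contained in some `S k`. -/
theorem exists_isKCover_pow_subset {𝒰 : Set (Set X)} (h𝒰 : IsKCover 𝒰) (n : ℕ)
    {S : ℕ → Set (Fin n → X)} (hS : ∀ k, IsOpen (S k)) (hmono : Monotone S)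
    (hcover : ∀ x, ∃ k, x ∈ S k) :
    ∃ C : Set (Set X), IsKCover C ∧ ∀ W ∈ C, ∃ k, ∀ x : Fin n → X, (∀ i, x i ∈ W) → x ∈ S k := by
  by_cases huniv : ∃ k, ∀ x, x ∈ S k
  · obtain ⟨k, hk⟩ := huniv
    exact ⟨𝒰, h𝒰, fun _ _ => ⟨k, fun x _ => hk x⟩⟩
  have key (K : Set X) (hK : IsCompact K) :
      ∃ W ∈ {W | IsOpen W ∧ ∃ k, ∀ x : Fin n → X, (∀ i, x i ∈ W) → x ∈ S k}, K ⊆ W := by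
    obtain ⟨k, hk⟩ := (isCompact_univ_pi fun _ : Fin n => hK).elim_directed_cover S hS
      (fun x _ => mem_iUnion.2 (hcover x)) hmono.directed_le
    obtain ⟨W, hW, hKW, hWS⟩ := hK.exists_isOpen_pow_subset n (hS k) fun x hx => hk fun i _ => hx i
    exact ⟨W, ⟨hW, k, hWS⟩, hKW⟩
  refine ⟨_, ⟨fun W hW => hW.1, ?_, ?_, key⟩, fun W hW => hW.2⟩
  · refine eq_univ_of_forall fun a => ?_
    obtain ⟨W, hW, haW⟩ := key {a} isCompact_singleton
    exact ⟨W, hW, haW rfl⟩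
  · rintro ⟨-, k, hk⟩
    exact huniv ⟨k, fun x => hk x fun _ => mem_univ _⟩

end

theorem Set.Finite.exists_range_fin_eq {α : Type*} {F : Set α} (hF : F.Finite)
    (hne : F.Nonempty) {n : ℕ} (hn : F.ncard ≤ n) : ∃ x : Fin n → α, range x = F := by
  have := hF.to_subtype
  have := hne.to_subtype
  obtain ⟨e⟩ : Nonempty (F ↪ Fin n) := by
    have := Fintype.ofFinite F
    refine Function.Embedding.nonempty_of_card_le ?_
    rwa [Fintype.card_fin, ← Nat.card_eq_fintype_card]
  refine ⟨fun i => (Function.invFun e i : F), ?_⟩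
  rw [range_comp' Subtype.val (Function.invFun e), (Function.invFun_surjective e.injective).range_eq]
  simp

theorem statement12 (X : Type u) [TopologicalSpace X] [T35Space X]
    (h : SfinSel {𝒰 : Set (Set X) | IsKCover 𝒰} {𝒰 : Set (Set X) | IsOmegaCover 𝒰}) :
    ¬ ∃ σ : List (Set (Set X)) → Set (Set X),
      IsWinningStrategyOneGfin {𝒰 : Set (Set X) | IsKCover 𝒰}
        {𝒰 : Set (Set X) | IsOmegaCover 𝒰} σ := by
  rintro ⟨σ, hσ, hwin⟩
  choose E hmono hsub hω using fun l => h.exists_monotone_finite (hσ l)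
  have hEo (l k) : ∀ V ∈ E l k, IsOpen V := fun V hV => (hσ l).1 V ((hsub l k).2 hV)
  choose C hC hCS using fun n => exists_isKCover_pow_subset (hσ []) n
    (S := fun k => {x | range x ∈ surelyCovered E n k []})
    (fun k => isOpen_setOf_range_mem_surelyCovered hEo n k (by simp))
    (fun _ _ hk _ hx => surelyCovered_mono hmono n [] hk hx)
    (fun x => exists_mem_surelyCovered hmono (fun l => hω l _ (finite_range x)) n [])
  obtain ⟨D, hD, hfreq⟩ := h.exists_frequently hC
  have hbound (n) : ∃ k, ∀ W ∈ D n, ∀ x : Fin n → X, (∀ i, x i ∈ W) →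
      range x ∈ surelyCovered E n k [] := by
    choose! g hg using hCS n
    obtain ⟨k, hk⟩ := ((hD n).1.image g).bddAbove
    exact ⟨k, fun W hW x hx => surelyCovered_mono hmono n [] (hk (mem_image_of_mem g hW))
      (hg W ((hD n).2 hW) x hx)⟩
  choose f hf using hbound
  have hcov (F : Set X) (hF : F.Finite) (hne : F.Nonempty) :
      ∃ V ∈ ⋃ n, E (historyOf E f n) (f n), F ⊆ V := by
    obtain ⟨n, hn, W, hW, hFW⟩ := hfreq F hF F.ncard
    obtain ⟨x, rfl⟩ := hF.exists_range_fin_eq hne hn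
    have hx := hf n W hW x fun i => hFW (mem_range_self i)
    obtain ⟨B, hB, V, hV, hFV⟩ :=
      coveredBy_historyOf_of_mem_surelyCovered hmono f n 0 (by simpa [historyOf] using hx)
    rw [historyOf_eq_ofFn, List.mem_ofFn] at hB
    obtain ⟨i, rfl⟩ := hB
    exact ⟨V, mem_iUnion.2 ⟨i, hV⟩, hFV⟩
  refine hwin (fun n => E (historyOf E f n) (f n))
    (fun n => historyOf_eq_ofFn (E := E) f n ▸ hsub _ _) ⟨?_, ?_, ?_, fun F hF => ?_⟩
  · intro V hV
    obtain ⟨n, hn⟩ := mem_iUnion.1 hV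
    exact hEo _ _ V hn
  · refine eq_univ_of_forall fun a => ?_
    obtain ⟨V, hV, haV⟩ := hcov {a} (finite_singleton a) (singleton_nonempty a)
    exact ⟨V, hV, haV rfl⟩
  · intro hV
    obtain ⟨n, hn⟩ := mem_iUnion.1 hV
    exact (hσ _).2.2.1 ((hsub _ _).2 hn)
  · rcases isEmpty_or_nonempty X with hX | ⟨⟨a⟩⟩
    · obtain ⟨U, hU, -⟩ := (hσ []).2.2.2 ∅ isCompact_empty
      exact absurd (Subsingleton.elim U univ ▸ hU) (hσ []).2.2.1
    · obtain ⟨V, hV, hFV⟩ := hcov (insert a F) (hF.insert a) (insert_nonempty a F)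
      exact ⟨V, hV, (subset_insert a F).trans hFV⟩
end

section
/- For a Tychonoff space X, if X satisfies S_fin(𝒦, Γ) — i.e., for every sequence (𝒰_n) of open k-covers of X one can choose finite 𝒱_n ⊆ 𝒰_n such that ⋃_n 𝒱_n is a γ-cover of X — then X satisfies S₁(𝒦, Γ), i.e., for every sequence (𝒰_n) of open k-covers of X one can choose U_n ∈ 𝒰_n such that {U_n : n ∈ ℕ} is a γ-cover of X. -/
open Set Filter Topology TopologicalSpace

universe u

/-- The open sets refining each of the first `n + 1` members of a sequence of k-covers form a
k-cover. -/
theorem IsKCover.commonRefinement {X : Type u} [TopologicalSpace X] {A : ℕ → Set (Set X)}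
    (hA : ∀ n, IsKCover (A n)) (n : ℕ) :
    IsKCover {V : Set X | IsOpen V ∧ ∀ i ≤ n, ∃ U ∈ A i, V ⊆ U} := by
  have hK : ∀ K : Set X, IsCompact K →
      ∃ V ∈ {V : Set X | IsOpen V ∧ ∀ i ≤ n, ∃ U ∈ A i, V ⊆ U}, K ⊆ V := by
    intro K hK
    choose u hu hKu using fun i => (hA i).2.2.2 K hK
    refine ⟨⋂ i ∈ Set.Iic n, u i, ⟨?_, fun i hi => ⟨u i, hu i, Set.biInter_subset_of_mem hi⟩⟩,
      Set.subset_iInter₂ fun i _ => hKu i⟩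
    exact (Set.finite_Iic n).isOpen_biInter fun i _ => (hA i).1 _ (hu i)
  refine ⟨fun V hV => hV.1, Set.eq_univ_of_forall fun x => ?_, fun huniv => ?_, hK⟩
  · obtain ⟨V, hV, hxV⟩ := hK {x} isCompact_singleton
    exact ⟨V, hV, hxV rfl⟩
  · obtain ⟨U, hU, hsub⟩ := huniv.2 0 n.zero_le
    exact (hA 0).2.2.1 (Set.univ_subset_iff.1 hsub ▸ hU)

/-- A sequence of proper open sets which eventually contain each finite set enumerates a
γ-cover. -/
theorem isGammaCover_range {X : Type u} [TopologicalSpace X] {b : ℕ → Set X}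
    (hopen : ∀ n, IsOpen (b n)) (hne : ∀ n, b n ≠ Set.univ)
    (hfin : ∀ F : Set X, F.Finite → {n | ¬ F ⊆ b n}.Finite) :
    IsGammaCover (Set.range b) := by
  refine ⟨Set.forall_mem_range.2 hopen, Set.eq_univ_of_forall fun x => ?_, fun hrange => ?_,
    fun F hF => ?_⟩
  · obtain ⟨n, hn⟩ := (hfin {x} (Set.finite_singleton x)).infinite_compl.nonempty
    exact ⟨b n, ⟨n, rfl⟩, by simpa using hn⟩
  · have := hrange.to_subtype
    obtain ⟨⟨U, m, rfl⟩, hU⟩ := Finite.exists_infinite_fiber (Set.rangeFactorization b)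
    refine hne m (Set.eq_univ_of_forall fun x => ?_)
    by_contra hx
    refine Set.infinite_coe_iff.1 hU
      ((hfin {x} (Set.finite_singleton x)).subset fun n hn => ?_)
    have hnm : b n = b m := congrArg Subtype.val hn
    simpa [hnm] using hx
  · refine ((hfin F hF).image b).subset ?_
    rintro _ ⟨⟨n, rfl⟩, hn⟩
    exact ⟨n, hn, rfl⟩

theorem statement14 (X : Type u) [TopologicalSpace X] [T35Space X]
    (h : SfinSel {𝒰 : Set (Set X) | IsKCover 𝒰} {𝒰 : Set (Set X) | IsGammaCover 𝒰}) :
    S1sel {𝒰 : Set (Set X) | IsKCover 𝒰} {𝒰 : Set (Set X) | IsGammaCover 𝒰} := by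
  intro A hA
  obtain ⟨B, hB, -, -, hinf, hγ⟩ := h _ (IsKCover.commonRefinement hA)
  have hnew : ∀ n, ∃ W ∈ ⋃ m, B m, W ∉ ⋃ m ∈ Set.Iio n, B m := fun n =>
    hinf.exists_notMem_finite ((Set.finite_Iio n).biUnion fun m _ => (hB m).1)
  choose W hW hWnew using hnew
  have hsel : ∀ n, ∃ U ∈ A n, W n ⊆ U := by
    intro n
    obtain ⟨m, hm⟩ := Set.mem_iUnion.1 (hW n)
    refine ((hB m).2 hm).2 n (not_lt.1 fun hmn => hWnew n ?_)
    exact Set.mem_biUnion (Set.mem_Iio.2 hmn) hm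
  choose b hb hWb using hsel
  refine ⟨b, hb, isGammaCover_range (fun n => (hA n).1 _ (hb n))
    (fun n hn => (hA n).2.2.1 (hn ▸ hb n)) fun F hF => ?_⟩
  have hfiber : ∀ V ∈ {V ∈ ⋃ m, B m | ¬ F ⊆ V}, (W ⁻¹' {V}).Finite := by
    rintro V ⟨hV, -⟩
    obtain ⟨m, hm⟩ := Set.mem_iUnion.1 hV
    refine (Set.finite_Iic m).subset fun n hn => Set.mem_Iic.2 (not_lt.1 fun hmn => hWnew n ?_)
    rw [Set.mem_singleton_iff.1 hn]
    exact Set.mem_biUnion (Set.mem_Iio.2 hmn) hm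
  refine ((hγ F hF).preimage' hfiber).subset fun n hn => ?_
  exact ⟨hW n, fun hFW => hn (hFW.trans (hWb n))⟩
end

section
/- Let X be a Tychonoff space with iw(X) = ℵ₀. If X satisfies S₁(𝒦, Γ) — i.e., for every sequence (𝒰_n) of open k-covers of X one can choose U_n ∈ 𝒰_n such that {U_n : n ∈ ℕ} is a γ-cover of X — then the bitopological function space (C(X), τ_k, τ_p) satisfies S₁(𝒟^k, 𝒮^p): for every sequence (D_n) of dense subsets of C_k(X) one can choose f_n ∈ D_n such that {f_n : n ∈ ℕ} is sequentially dense in C_p(X), i.e., every g ∈ C(X) is the pointwise limit of a sequence of elements of {f_n : n ∈ ℕ}. -/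
open Set Filter Topology TopologicalSpace

universe u

/-- A space of countable `i`-weight admits a countable family of continuous real-valued functions
that approximates every continuous function uniformly on compact sets. -/
theorem CountableIWeight.exists_seq_approx_on_compact {X : Type u} [TopologicalSpace X]
    (hiw : CountableIWeight X) :
    ∃ q : ℕ → C(X, ℝ), ∀ (g : C(X, ℝ)) (K : Set X), IsCompact K → ∀ ε > 0,
      ∃ m, ∀ x ∈ K, |q m x - g x| < ε := by
  obtain ⟨Y, _, _, _, f, hf, hfb⟩ := hiw
  let : MetricSpace Y := metrizableSpaceMetric Y
  obtain ⟨F, hF⟩ := Metric.PiNatEmbed.exists_embedding_to_hilbert_cube (X := Y)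
  let ι : C(X, ℕ → unitInterval) := ⟨F ∘ f, hF.continuous.comp hf⟩
  have hι : Function.Injective ι := hF.injective.comp hfb.injective
  refine ⟨fun m => (denseSeq C(ℕ → unitInterval, ℝ) m).comp ι, fun g K hK ε hε => ?_⟩
  have : CompactSpace K := isCompact_iff_compactSpace.mp hK
  have he : IsClosedEmbedding (fun x : K => ι x) :=
    Continuous.isClosedEmbedding (by fun_prop) (hι.comp Subtype.val_injective)
  obtain ⟨G, hG⟩ := (g.restrict K).exists_extension' he
  obtain ⟨m, hm⟩ := (denseRange_denseSeq C(ℕ → unitInterval, ℝ)).exists_dist_lt G hε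
  refine ⟨m, fun x hx => ?_⟩
  have hGx : G (ι x) = g x := congrFun hG ⟨x, hx⟩
  rw [ContinuousMap.comp_apply, ← hGx, ← Real.dist_eq, dist_comm]
  exact (ContinuousMap.dist_apply_le_dist _).trans_lt hm

/-- Under `S₁(𝒦, Γ)`, given a sequence of open families each of which absorbs every compact set,
one can pick one member of each so that every point lies in all but finitely many of them. -/
theorem exists_selection_eventually_mem {X : Type u} [TopologicalSpace X] [T1Space X]
    (h : S1sel {𝒰 : Set (Set X) | IsKCover 𝒰} {𝒰 : Set (Set X) | IsGammaCover 𝒰})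
    (𝒰 : ℕ → Set (Set X)) (ho : ∀ n, ∀ U ∈ 𝒰 n, IsOpen U)
    (hK : ∀ n, ∀ K : Set X, IsCompact K → ∃ U ∈ 𝒰 n, K ⊆ U) :
    ∃ U : ℕ → Set X, (∀ n, U n ∈ 𝒰 n) ∧ ∀ x, ∀ᶠ n in atTop, x ∈ U n := by
  by_cases hX : IsCompact (univ : Set X)
  · choose U hU hsub using fun n => hK n univ hX
    exact ⟨U, hU, fun x => Eventually.of_forall fun n => hsub n (mem_univ x)⟩
  let 𝒲 : ℕ → Set (Set X) := fun n => {W | ∃ (a : X) (U : ℕ → Set X),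
    (∀ i, U i ∈ 𝒰 i) ∧ W = {a}ᶜ ∩ ⋂ i ∈ Finset.range (n + 1), U i}
  have hcov : ∀ n, ∀ K : Set X, IsCompact K → ∃ W ∈ 𝒲 n, K ⊆ W := by
    intro n K hKc
    obtain ⟨a, ha⟩ : ∃ a, a ∉ K := by
      by_contra! hall
      exact hX (eq_univ_of_forall hall ▸ hKc)
    choose U hU hsub using fun i => hK i K hKc
    refine ⟨_, ⟨a, U, hU, rfl⟩, subset_inter (fun x hx hxa => ha ?_) ?_⟩
    · rwa [← mem_singleton_iff.mp hxa]
    · exact subset_iInter₂ fun i _ => hsub i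
  have h𝒲 : ∀ n, IsKCover (𝒲 n) := by
    refine fun n => ⟨?_, ?_, ?_, hcov n⟩
    · rintro _ ⟨a, U, hU, rfl⟩
      exact isOpen_compl_singleton.inter
        (isOpen_biInter_finset fun i _ => ho i _ (hU i))
    · refine eq_univ_of_forall fun x => ?_
      obtain ⟨W, hW, hxW⟩ := hcov n {x} isCompact_singleton
      exact ⟨W, hW, hxW rfl⟩
    · rintro ⟨a, U, -, hW⟩
      exact (hW ▸ mem_univ a : a ∈ {a}ᶜ ∩ ⋂ i ∈ Finset.range (n + 1), U i).1 rfl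
  obtain ⟨W, hW, -, -, hinf, hfin⟩ := h 𝒲 h𝒲
  choose a U hU hWU using hW
  obtain ⟨s, -, hs⟩ := exists_subset_bijOn univ W
  rw [image_univ] at hs
  have hsinf : s.Infinite := fun hsf => hinf (hs.image_eq ▸ hsf.image W)
  have hmono := Nat.nth_strictMono (p := (· ∈ s)) hsinf
  have hmem : ∀ j, Nat.nth (· ∈ s) j ∈ s := Nat.nth_mem_of_infinite hsinf
  refine ⟨fun j => U (Nat.nth (· ∈ s) j) j, fun j => hU _ j, fun x => ?_⟩
  have hev : ∀ᶠ j in atTop, x ∈ W (Nat.nth (· ∈ s) j) := by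
    rw [← Nat.cofinite_eq_atTop]
    refine ((hfin {x} (finite_singleton x)).preimage
      (f := fun j => W (Nat.nth (· ∈ s) j)) ?_).subset ?_
    · exact fun i _ j _ hij => hmono.injective (hs.injOn (hmem i) (hmem j) hij)
    · exact fun j hj => ⟨mem_range_self _, fun hsub => hj (hsub rfl)⟩
  filter_upwards [hev] with j hj
  rw [hWU] at hj
  exact mem_iInter₂.mp hj.2 j (Finset.mem_range.mpr (Nat.lt_succ_of_le (hmono.le_apply)))

/-- Under `S₁(𝒦, Γ)`, if each `D n` contains functions arbitrarily close to `g n` on every compact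
set, one can pick `f n ∈ D n` with `f n - g n` converging pointwise to `0`. -/
theorem exists_selection_tendsto_sub {X : Type u} [TopologicalSpace X] [T1Space X]
    (h : S1sel {𝒰 : Set (Set X) | IsKCover 𝒰} {𝒰 : Set (Set X) | IsGammaCover 𝒰})
    (D : ℕ → Set C(X, ℝ)) (g : ℕ → C(X, ℝ))
    (hD : ∀ n, ∀ K : Set X, IsCompact K → ∀ ε > 0, ∃ f ∈ D n, ∀ x ∈ K, |f x - g n x| < ε) :
    ∃ f : ℕ → C(X, ℝ), (∀ n, f n ∈ D n) ∧
      ∀ x, Tendsto (fun n => f n x - g n x) atTop (𝓝 0) := by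
  obtain ⟨U, hU, hev⟩ := exists_selection_eventually_mem h
    (fun n => (fun f : C(X, ℝ) => {x | |f x - g n x| < 1 / ((n : ℝ) + 1)}) '' D n)
    (by
      rintro n _ ⟨f, -, rfl⟩
      exact isOpen_lt (by fun_prop) continuous_const)
    (fun n K hK => by
      obtain ⟨f, hf, hfK⟩ := hD n K hK _ (Nat.one_div_pos_of_nat (n := n))
      exact ⟨_, mem_image_of_mem _ hf, hfK⟩)
  choose f hf hfU using hU
  refine ⟨f, hf, fun x => squeeze_zero_norm' ?_ tendsto_one_div_add_atTop_nhds_zero_nat⟩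
  filter_upwards [hev x] with n hn
  rw [← hfU] at hn
  exact le_of_lt hn

/-- A dense subset of `C_k(X)` approximates every function uniformly on compact sets. -/
theorem Dense.exists_approx_on_compact {X : Type u} [TopologicalSpace X] {D : Set C(X, ℝ)}
    (hD : Dense D) (g : C(X, ℝ)) {K : Set X} (hK : IsCompact K) {ε : ℝ} (hε : 0 < ε) :
    ∃ f ∈ D, ∀ x ∈ K, |f x - g x| < ε := by
  have hopen : IsOpen {f : C(X, ℝ) | MapsTo (f - g) K (Metric.ball (0 : ℝ) ε)} :=
    (ContinuousMap.isOpen_setOfPred_mapsTo hK Metric.isOpen_ball).preimage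
      (continuous_id.sub continuous_const)
  obtain ⟨f, hf, hfD⟩ := hD.inter_open_nonempty _ hopen ⟨g, fun x _ => by simpa using hε⟩
  exact ⟨f, hfD, fun x hx => by simpa using hf hx⟩

/-- Convergence in `C_p(X)` is pointwise convergence. -/
theorem tendsto_nhds_pointwiseTopology_iff {X α : Type*} [TopologicalSpace X] {l : Filter α}
    {s : α → C(X, ℝ)} {g : C(X, ℝ)} :
    Tendsto s l (@nhds _ (pointwiseTopology X) g) ↔
      ∀ x, Tendsto (fun a => s a x) l (𝓝 (g x)) := by
  rw [pointwiseTopology, nhds_induced, tendsto_comap_iff, tendsto_pi_nhds]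
  rfl


theorem statement16 (X : Type u) [TopologicalSpace X] [T35Space X]
    (hiw : CountableIWeight X)
    (h : S1sel {𝒰 : Set (Set X) | IsKCover 𝒰} {𝒰 : Set (Set X) | IsGammaCover 𝒰}) :
    S1sel {D : Set C(X, ℝ) | Dense D} {A : Set C(X, ℝ) | SeqDenseP X A} := by
  obtain ⟨q, hq⟩ := hiw.exists_seq_approx_on_compact
  intro D hD
  obtain ⟨f, hfD, hf⟩ := exists_selection_tendsto_sub h D (fun n => q n.unpair.1)
    fun n K hK ε hε => (hD n).exists_approx_on_compact _ hK hε
  refine ⟨f, hfD, fun g => ?_⟩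
  obtain ⟨p, hp, hpg⟩ := exists_selection_tendsto_sub h (fun _ => range q) (fun _ => g)
    fun _ K hK ε hε => by
      obtain ⟨m, hm⟩ := hq g K hK ε hε
      exact ⟨q m, mem_range_self m, hm⟩
  choose m hm using hp
  have hM : Tendsto (fun j => Nat.pair (m j) j) atTop atTop :=
    tendsto_atTop_mono (fun j => Nat.right_le_pair (m j) j) tendsto_id
  refine ⟨fun j => f (Nat.pair (m j) j), fun j => mem_range_self _,
    tendsto_nhds_pointwiseTopology_iff.mpr fun x => ?_⟩
  have hsum := (((hf x).comp hM).add (hpg x)).add_const (g x)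
  simpa [Function.comp_def, hm] using hsum
end

section
/- Let X be a Tychonoff space. If the bitopological function space (C(X), τ_k, τ_p) satisfies (𝒟^k choose 𝒮^p) — i.e., every dense subset of C_k(X) contains a countable subset that is sequentially dense in C_p(X) — then X satisfies (𝒦 choose Γ): every open k-cover of X contains a countable subfamily that is a γ-cover of X (i.e., X is a γ_k-set). -/
open Set Filter Topology TopologicalSpace

universe u

/-- In a Tychonoff space, a continuous function on a compact set can be changed to take the
constant value `c` off a given open neighbourhood of that set. -/
lemma exists_continuousMap_eqOn_compact_eqOn_compl {X : Type*} [TopologicalSpace X] [T35Space X]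
    {K U : Set X} (hK : IsCompact K) (hU : IsOpen U) (hKU : K ⊆ U) (g : C(X, ℝ)) (c : ℝ) :
    ∃ f : C(X, ℝ), EqOn f g K ∧ ∀ x ∉ U, f x = c := by
  obtain ⟨W, hW, rfl⟩ := (isInducing_stoneCechUnit (X := X)).isOpen_iff.1 hU
  have hKc : IsCompact (stoneCechUnit '' K) := hK.image continuous_stoneCechUnit
  have hdisj : Disjoint Wᶜ (stoneCechUnit '' K) := by
    rw [disjoint_compl_left_iff_subset]
    exact image_subset_iff.2 hKU
  obtain ⟨φ, hφ0, hφ1, -⟩ :=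
    exists_continuous_zero_one_of_isClosed hW.isClosed_compl hKc.isClosed hdisj
  let ψ : C(X, ℝ) := φ.comp ⟨stoneCechUnit, continuous_stoneCechUnit⟩
  refine ⟨ψ * g + (1 - ψ) * ContinuousMap.const X c, fun x hx => ?_, fun x hx => ?_⟩
  · have : ψ x = 1 := hφ1 (mem_image_of_mem _ hx)
    simp [this]
  · have : ψ x = 0 := hφ0 hx
    simp [this]

/-- If every compact set lies in a member of the family `𝒰` of open sets, the continuous functions
that are constantly `c` off some member of `𝒰` are dense in the compact-open topology. -/
lemma dense_setOf_eq_const_off_mem {X : Type*} [TopologicalSpace X] [T35Space X]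
    {𝒰 : Set (Set X)} (hopen : ∀ U ∈ 𝒰, IsOpen U)
    (hcpt : ∀ K : Set X, IsCompact K → ∃ U ∈ 𝒰, K ⊆ U) (c : ℝ) :
    Dense {f : C(X, ℝ) | ∃ U ∈ 𝒰, ∀ x ∉ U, f x = c} := by
  intro g
  rw [mem_closure_iff_nhds]
  intro N hN
  obtain ⟨S, hSfin, hS, hSN⟩ := ContinuousMap.mem_nhds_iff.1 hN
  have hK : IsCompact (⋃ p ∈ S, p.1) := hSfin.isCompact_biUnion fun p hp => (hS p.1 p.2 hp).1
  obtain ⟨U, hU𝒰, hKU⟩ := hcpt _ hK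
  obtain ⟨f, hfg, hfc⟩ :=
    exists_continuousMap_eqOn_compact_eqOn_compl hK (hopen U hU𝒰) hKU g c
  refine ⟨f, hSN fun K V hKV x hx => ?_, U, hU𝒰, hfc⟩
  rw [hfg (mem_biUnion hKV hx)]
  exact (hS K V hKV).2.2 hx

/-- A sequence of proper open sets in which every point eventually lies enumerates a
`γ`-cover. -/
lemma isGammaCover_range_s18 {X : Type u} [TopologicalSpace X] {U : ℕ → Set X}
    (hopen : ∀ n, IsOpen (U n)) (hne : ∀ n, U n ≠ univ) (hU : ∀ x, ∀ᶠ n in atTop, x ∈ U n) :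
    IsGammaCover (range U) := by
  refine ⟨forall_mem_range.2 hopen, ?_, fun hfin => ?_, fun F hF => ?_⟩
  · refine eq_univ_of_forall fun x => ?_
    obtain ⟨n, hn⟩ := (hU x).exists
    exact ⟨U n, mem_range_self n, hn⟩
  · have : Finite (range U) := hfin
    obtain ⟨V, hV⟩ := Finite.exists_infinite_fiber (rangeFactorization U)
    have hfreq : ∃ᶠ n in atTop, rangeFactorization U n = V :=
      Nat.frequently_atTop_iff_infinite.2 (Set.infinite_coe_iff.1 hV)
    obtain ⟨m, hm⟩ := V.2
    refine hne m (eq_univ_of_forall fun x => ?_)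
    obtain ⟨n, hn, hx⟩ := (hfreq.and_eventually (hU x)).exists
    rwa [hm, ← show U n = V from congrArg Subtype.val hn]
  · have hev : ∀ᶠ n in atTop, F ⊆ U n := (eventually_all_finite hF).2 fun x _ => hU x
    rw [← Nat.cofinite_eq_atTop, eventually_cofinite] at hev
    refine (hev.image U).subset ?_
    rintro _ ⟨⟨n, rfl⟩, hn⟩
    exact mem_image_of_mem U hn

theorem statement18 (X : Type u) [TopologicalSpace X] [T35Space X]
    (h : ∀ D : Set C(X, ℝ), Dense D → ∃ V ⊆ D, V.Countable ∧ SeqDenseP X V) :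
    ∀ 𝒰 : Set (Set X), IsKCover 𝒰 → ∃ 𝒱 ⊆ 𝒰, 𝒱.Countable ∧ IsGammaCover 𝒱 := by
  rintro 𝒰 ⟨hopen, -, huniv, hcpt⟩
  obtain ⟨V, hVD, -, hV⟩ := h _ (dense_setOf_eq_const_off_mem hopen hcpt 1)
  obtain ⟨s, hsV, hs⟩ := hV 0
  choose U hU𝒰 hsU using fun n => hVD (hsV n)
  refine ⟨range U, range_subset_iff.2 hU𝒰, countable_range U,
    isGammaCover_range_s18 (fun n => hopen _ (hU𝒰 n)) (fun n hn => huniv (hn ▸ hU𝒰 n)) fun x => ?_⟩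
  have hsx : Tendsto (fun n => s n x) atTop (𝓝 0) := by
    rw [pointwiseTopology, nhds_induced, tendsto_comap_iff] at hs
    exact tendsto_pi_nhds.1 hs x
  filter_upwards [hsx.eventually_ne zero_ne_one] with n hn
  by_contra hx
  exact hn (hsU n x hx)
end
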